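/- There exists an absolute constant c > 0 with the following property. Let K ⊂ ℝ² be a convex body, let s(K) be its Santaló point, and let ε > 0 be such that the Banach–Mazur distance of K from ellipses is at least 1 + ε, that is, there are no invertible linear map T : ℝ² → ℝ², vector a ∈ ℝ², and λ ∈ [1, 1+ε) with T(B²) + a ⊆ K ⊆ λ·T(B²) + a. Then V(K)·V((K − s(K))*) ≤ π²·(1 − c·ε⁶). -/

import Mathlib

/-!
The polar of `K` with respect to the Santaló point is the smallest one, so it suffices to bound the
volume product with respect to some other interior point `z`. Take for `z` the intersection of two
lines that cut `K` into four parts of equal area (`exists_quartering`). After an affine map these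
lines are the coordinate axes, each quadrant of `K` has area `π / 4`, and the task is to show that
the polar has area at most `π`, and that near-equality makes `K` close to an ellipse.

In one quadrant, let `f` and `k` be the gauges of `K` and of its polar on the line `x = 1`, as
functions of the slope. Then `1 + p s ≤ f p * k s`, and the areas are half the integrals of `1 / f²`
and `1 / k²`. If slopes `p` and `S p` are matched so that they cut off equal proportions of the two
areas, the function `m p = √(p * S p)` satisfies `S' ≤ m'²`, and comparing with `arctan (m p)` shows
that the product of the two areas is at most `π² / 16`. The identity `m'² - S' = (m' - m / p)²` turns
the deficit `δ` into a bound of order `√δ` for the distance of `m`, on the scale of angles, from a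
linear function, so that the areas of the sectors of `K` agree with those of an ellipse
`x² / ρ + ρ y² ≤ 1` up to order `√δ` (`sector_stability`, `quadrant_stability`).

By convexity, closeness of sector areas up to order `Δ²` gives uniform closeness of the gauges up to
order `Δ`; at the axes, convexity of the gauge across the axis is used, which also forces the
parameters `ρ` of adjacent quadrants to agree up to a factor `1 - O(Δ)`
(`SectorClose.half_plane`, `four_quadrants`). With `δ` of order `ε⁶` and `Δ` of order `ε`, the
condition `√δ ≪ Δ²` holds for bounded `ε`, and `K` lies between an ellipse and a dilate of it by a
factor less than `1 + ε`. Large `ε` do not occur, since every planar convex body lies between an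
ellipse and its 12-fold dilate (`exists_rough_ellipse`).
-/

open MeasureTheory Real
open scoped Pointwise RealInnerProductSpace ENNReal

noncomputable section

/-- The polar body of the translate K − z:
`(K − z)* = {y : ⟪x − z, y⟫ ≤ 1 for all x ∈ K}`. -/
def translatePolar {d : ℕ} (K : Set (EuclideanSpace ℝ (Fin d)))
    (z : EuclideanSpace ℝ (Fin d)) : Set (EuclideanSpace ℝ (Fin d)) :=
  {y | ∀ x ∈ K, ⟪x - z, y⟫ ≤ 1}

/-- s is the Santaló point of K: it lies in the interior of K and minimizes
the volume of the polar of the corresponding translate. -/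
def IsSantaloPoint {d : ℕ} (K : Set (EuclideanSpace ℝ (Fin d)))
    (s : EuclideanSpace ℝ (Fin d)) : Prop :=
  s ∈ interior K ∧
    ∀ z ∈ interior K, volume (translatePolar K s) ≤ volume (translatePolar K z)

/-- κ_d, the volume of the d-dimensional Euclidean unit ball, as a real number. -/
def kappa (d : ℕ) : ℝ :=
  (volume (Metric.closedBall (0 : EuclideanSpace ℝ (Fin d)) 1)).toReal

abbrev E2 := EuclideanSpace ℝ (Fin 2)

section

open Set Filter Topology

/-! ### Matching slopes by area -/

/-- Area matching: writing `F` and `G` for the primitives of `1 / f²` and `1 / k²` that vanish at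
`0`, the equation `G (S p) / β = F p / α` defines a monotone differentiable map `S` of the positive
slopes. -/
theorem matching_exists {f k : ℝ → ℝ} (hf : Continuous f) (hk : Continuous k)
    (hf0 : ∀ t, 0 < f t) (hk0 : ∀ t, 0 < k t)
    (hfi : IntegrableOn (fun t => (f t ^ 2)⁻¹) (Ioi 0))
    (hki : IntegrableOn (fun t => (k t ^ 2)⁻¹) (Ioi 0)) {α β : ℝ}
    (hα : ∫ t in Ioi 0, (f t ^ 2)⁻¹ = α) (hβ : ∫ t in Ioi 0, (k t ^ 2)⁻¹ = β) :
    0 < α ∧ 0 < β ∧ ∃ S : ℝ → ℝ, (∀ p, 0 < p → 0 < S p) ∧ MonotoneOn S (Ioi 0) ∧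
      ∀ p, 0 < p → HasDerivAt S (β / α * (f p ^ 2)⁻¹ * k (S p) ^ 2) p := by
  have hcf : Continuous fun t => (f t ^ 2)⁻¹ :=
    (hf.pow 2).inv₀ fun t => (pow_pos (hf0 t) 2).ne'
  have hck : Continuous fun t => (k t ^ 2)⁻¹ :=
    (hk.pow 2).inv₀ fun t => (pow_pos (hk0 t) 2).ne'
  set F : ℝ → ℝ := fun p => ∫ t in (0:ℝ)..p, (f t ^ 2)⁻¹ with hF
  set G : ℝ → ℝ := fun p => ∫ t in (0:ℝ)..p, (k t ^ 2)⁻¹ with hG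
  have hFd : ∀ p, HasDerivAt F ((f p ^ 2)⁻¹) p := fun p =>
    hcf.integral_hasStrictDerivAt 0 p |>.hasDerivAt
  have hGd : ∀ p, HasDerivAt G ((k p ^ 2)⁻¹) p := fun p =>
    hck.integral_hasStrictDerivAt 0 p |>.hasDerivAt
  have hFm : StrictMono F := strictMono_of_hasDerivAt_pos hFd fun p => by
    have := hf0 p; positivity
  have hGm : StrictMono G := strictMono_of_hasDerivAt_pos hGd fun p => by
    have := hk0 p; positivity
  have hF0 : F 0 = 0 := by simp [hF]
  have hG0 : G 0 = 0 := by simp [hG]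
  have hFt : Tendsto F atTop (𝓝 α) := hα ▸ intervalIntegral_tendsto_integral_Ioi 0 hfi tendsto_id
  have hGt : Tendsto G atTop (𝓝 β) := hβ ▸ intervalIntegral_tendsto_integral_Ioi 0 hki tendsto_id
  have lt_of {H : ℝ → ℝ} {a : ℝ} (hm : StrictMono H) (ht : Tendsto H atTop (𝓝 a)) (p : ℝ) :
      H p < a := (hm (lt_add_one p)).trans_le (hm.monotone.ge_of_tendsto ht _)
  have hα0 : 0 < α := hF0 ▸ lt_of hFm hFt 0
  have hβ0 : 0 < β := hG0 ▸ lt_of hGm hGt 0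
  have hGc : Continuous G := continuous_iff_continuousAt.2 fun p => (hGd p).continuousAt
  refine ⟨hα0, hβ0, ?_⟩
  have hex : ∀ p, 0 < p → ∃ s, 0 < s ∧ G s = β / α * F p := by
    intro p hp
    have h1 : 0 < β / α * F p := mul_pos (div_pos hβ0 hα0) (hF0 ▸ hFm hp)
    have h2 : β / α * F p < β := by
      rw [div_mul_eq_mul_div, div_lt_iff₀ hα0]
      exact mul_lt_mul_of_pos_left (lt_of hFm hFt p) hβ0
    obtain ⟨M, hM⟩ := (hGt.eventually (lt_mem_nhds h2)).and (eventually_ge_atTop 0) |>.exists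
    obtain ⟨s, hs, hs'⟩ := intermediate_value_Icc hM.2 hGc.continuousOn
      (show β / α * F p ∈ Icc (G 0) (G M) from ⟨by rw [hG0]; exact h1.le, hM.1.le⟩)
    refine ⟨s, ?_, hs'⟩
    rw [← hGm.lt_iff_lt, hG0, hs']; exact h1
  choose! S hS0 hS using hex
  have hSm : StrictMonoOn S (Ioi 0) := by
    intro p hp q hq hpq
    rw [← hGm.lt_iff_lt, hS p hp, hS q hq]
    exact mul_lt_mul_of_pos_left (hFm hpq) (div_pos hβ0 hα0)
  refine ⟨S, hS0, hSm.monotoneOn, fun p hp => ?_⟩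
  have hsd : HasStrictDerivAt G ((k (S p) ^ 2)⁻¹) (S p) := hck.integral_hasStrictDerivAt 0 (S p)
  have hne : (k (S p) ^ 2)⁻¹ ≠ 0 := by have := hk0 (S p); positivity
  have hloc := hsd.to_localInverse hne
  have hev : ∀ᶠ q in 𝓝 p, S q = (hsd.localInverse G _ _ hne) (β / α * F q) := by
    have hcont : Tendsto (fun q => (hsd.localInverse G _ _ hne) (β / α * F q)) (𝓝 p)
        (𝓝 (S p)) := by
      have h3 := hloc.hasDerivAt.continuousAt
      have h4 : ContinuousAt (fun q => β / α * F q) p := ((hFd p).continuousAt).const_mul _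
      have h5 := ContinuousAt.comp_of_eq (g := hsd.localInverse G _ _ hne) h3 h4 (hS p hp).symm
      have h6 : (hsd.localInverse G _ _ hne) (β / α * F p) = S p := by
        rw [← hS p hp]
        exact HasStrictFDerivAt.localInverse_apply_image _
      have := h5.tendsto
      simp only [Function.comp_def, h6] at this
      exact this
    have hri : ∀ᶠ q in 𝓝 p, G ((hsd.localInverse G _ _ hne) (β / α * F q)) = β / α * F q := by
      have h7 := HasStrictFDerivAt.eventually_right_inverse
        (hsd.hasStrictFDerivAt_equiv hne)
      have h4 : Tendsto (fun q => β / α * F q) (𝓝 p) (𝓝 (G (S p))) := by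
        rw [hS p hp]; exact ((hFd p).continuousAt).const_mul _
      exact h4.eventually h7
    filter_upwards [hri, lt_mem_nhds hp] with q hq hq0
    exact hGm.injective (by rw [hq, hS q hq0])
  have h8 : HasDerivAt (fun q => (hsd.localInverse G _ _ hne) (β / α * F q))
      (((k (S p) ^ 2)⁻¹)⁻¹ * (β / α * (f p ^ 2)⁻¹)) p := by
    have h9 := hloc.hasDerivAt
    rw [hS p hp] at h9
    exact h9.comp p ((hFd p).const_mul (β / α))
  have := h8.congr_of_eventuallyEq hev
  have heq : β / α * (f p ^ 2)⁻¹ * k (S p) ^ 2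
      = ((k (S p) ^ 2)⁻¹)⁻¹ * (β / α * (f p ^ 2)⁻¹) := by rw [inv_inv]; ring
  rw [heq]; exact this

/-- The one-quadrant inequality and its stability. Here `f` and `k` are the restrictions to the line
`x = 1` of the gauges of a body and of its polar, and `1 + p s ≤ f p * k s` expresses polarity. If
slopes `p` and `S p` are matched by area and `m p = √(p * S p)`, then the derivative of
`√(β/α) * F p` is at most that of `arctan (m p)`; this gives `√(β/α) * α ≤ π/2`. The deficit `d`
controls the integral of `(m' - √S') / (1 + m²)`, hence, by `m'² - S' = (m' - m/p)²` and
Cauchy–Schwarz, the variation of `m p / p`. So `m` is nearly linear, `m p ≈ ρ p`. -/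
theorem sector_stability {f k : ℝ → ℝ} (hf : Continuous f) (hk : Continuous k)
    (hf0 : ∀ t, 0 < f t) (hk0 : ∀ t, 0 < k t)
    (hfk : ∀ p s, 0 < p → 0 < s → 1 + p * s ≤ f p * k s)
    (hfi : IntegrableOn (fun t => (f t ^ 2)⁻¹) (Ioi 0))
    (hki : IntegrableOn (fun t => (k t ^ 2)⁻¹) (Ioi 0)) {α β : ℝ}
    (hα : ∫ t in Ioi 0, (f t ^ 2)⁻¹ = α) (hβ : ∫ t in Ioi 0, (k t ^ 2)⁻¹ = β) :
    √(β / α) * α ≤ π / 2 ∧ ∀ d, 0 < d → π / 2 - √(β / α) * α ≤ d →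
      ∃ ρ, 0 < ρ ∧ ∀ p, 0 ≤ p →
        |√(β / α) * (∫ t in (0:ℝ)..p, (f t ^ 2)⁻¹) - arctan (ρ * p)| ≤ d + √(π * d) := by
  obtain ⟨hα0, hβ0, S, hS0, hSm, hSd⟩ := matching_exists hf hk hf0 hk0 hfi hki hα hβ
  have hcf : Continuous fun t => (f t ^ 2)⁻¹ :=
    (hf.pow 2).inv₀ fun t => (pow_pos (hf0 t) 2).ne'
  set F : ℝ → ℝ := fun p => ∫ t in (0:ℝ)..p, (f t ^ 2)⁻¹ with hF
  have hFd : ∀ p, HasDerivAt F ((f p ^ 2)⁻¹) p := fun p =>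
    hcf.integral_hasStrictDerivAt 0 p |>.hasDerivAt
  have hF0 : F 0 = 0 := by simp [hF]
  have hFt : Tendsto F atTop (𝓝 α) := hα ▸ intervalIntegral_tendsto_integral_Ioi 0 hfi tendsto_id
  set c := √(β / α) with hc
  have hc2 : c ^ 2 = β / α := Real.sq_sqrt (div_pos hβ0 hα0).le
  have hc0 : 0 < c := Real.sqrt_pos.2 (div_pos hβ0 hα0)
  -- the derivative of the matching map is the square of `q = c * k (S p) / f p`
  set q : ℝ → ℝ := fun p => c * k (S p) / f p with hq
  have hq0 : ∀ p, 0 < q p := fun p => div_pos (mul_pos hc0 (hk0 _)) (hf0 p)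
  have hSd' : ∀ p, 0 < p → HasDerivAt S (q p ^ 2) p := by
    intro p hp
    have := hSd p hp
    have he : q p ^ 2 = β / α * (f p ^ 2)⁻¹ * k (S p) ^ 2 := by
      rw [← hc2]; simp only [hq, div_pow, mul_pow]; ring
    rw [he]; exact this
  -- geometric mean of matched slopes
  set m : ℝ → ℝ := fun p => √(p * S p) with hm
  have hm0 : ∀ p, 0 < p → 0 < m p := fun p hp => Real.sqrt_pos.2 (mul_pos hp (hS0 p hp))
  have hm2 : ∀ p, 0 < p → m p ^ 2 = p * S p := fun p hp =>
    Real.sq_sqrt (mul_pos hp (hS0 p hp)).le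
  set m' : ℝ → ℝ := fun p => (S p + p * q p ^ 2) / (2 * m p) with hm'
  have hm'0 : ∀ p, 0 < p → 0 < m' p := fun p hp => by
    have := hm0 p hp; have := hS0 p hp; have := hq0 p
    simp only [hm']; positivity
  have hmd : ∀ p, 0 < p → HasDerivAt m (m' p) p := by
    intro p hp
    have h1 : HasDerivAt (fun p => p * S p) (1 * S p + p * q p ^ 2) p :=
      (hasDerivAt_id p).mul (hSd' p hp)
    have h2 := h1.sqrt (mul_pos hp (hS0 p hp)).ne'
    rw [one_mul] at h2
    exact h2
  set h : ℝ → ℝ := fun p => arctan (m p) with hh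
  have hhd : ∀ p, 0 < p → HasDerivAt h (m' p / (1 + m p ^ 2)) p := by
    intro p hp
    have := (hmd p hp).arctan
    convert this using 1
    ring
  -- the key identity `m'² - S' = (m' - m/p)²`
  have hkey : ∀ p, 0 < p → m' p ^ 2 - q p ^ 2 = (m' p - m p / p) ^ 2 := by
    intro p hp
    have h1 := hm2 p hp
    have h2 := hm0 p hp
    have h3 : 2 * m p * m' p = S p + p * q p ^ 2 := by simp only [hm']; field_simp
    have h4 : S p = m p ^ 2 / p := by rw [h1]; field_simp
    have h5 : q p ^ 2 = (2 * m p * m' p - m p ^ 2 / p) / p := by rw [h3, h4]; field_simp; ring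
    rw [h5]; field_simp; ring
  have hqm : ∀ p, 0 < p → q p ≤ m' p := by
    intro p hp
    have := hkey p hp
    nlinarith [sq_nonneg (m' p - m p / p), hq0 p, hm'0 p hp]
  have hcq : ∀ p, 0 < p → c * (f p ^ 2)⁻¹ ≤ q p / (1 + m p ^ 2) := by
    intro p hp
    have h1 := hfk p (S p) hp (hS0 p hp)
    have h2 := hf0 p
    have h3 : 0 < 1 + m p ^ 2 := by positivity
    rw [le_div_iff₀ h3, hm2 p hp]
    simp only [hq]
    rw [← div_eq_mul_inv, div_mul_eq_mul_div, div_le_div_iff₀ (by positivity) h2]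
    nlinarith [mul_le_mul_of_nonneg_left h1 (mul_pos hc0 h2).le]
  -- the deficit accumulated up to slope `p`; it is monotone with values in `[0, π / 2 - c * α]`
  set e : ℝ → ℝ := fun p => h p - c * F p with he
  set e' : ℝ → ℝ := fun p => m' p / (1 + m p ^ 2) - c * (f p ^ 2)⁻¹ with he'
  have hed : ∀ p, 0 < p → HasDerivAt e (e' p) p := fun p hp =>
    (hhd p hp).sub ((hFd p).const_mul c)
  have he'le : ∀ p, 0 < p → (m' p - q p) / (1 + m p ^ 2) ≤ e' p := by
    intro p hp
    have := hcq p hp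
    simp only [he', sub_div]; linarith
  have he'0 : ∀ p, 0 < p → 0 ≤ e' p := fun p hp =>
    (div_nonneg (sub_nonneg.2 (hqm p hp)) (by positivity)).trans (he'le p hp)
  have mono_of {u u' : ℝ → ℝ} (hd : ∀ p, 0 < p → HasDerivAt u (u' p) p)
      (h0 : ∀ p, 0 < p → 0 ≤ u' p) : MonotoneOn u (Ioi 0) := by
    refine monotoneOn_of_hasDerivWithinAt_nonneg (convex_Ioi 0)
      (fun p hp => (hd p hp).continuousAt.continuousWithinAt) (f' := u')
      (fun p hp => ?_) (fun p hp => ?_) <;> rw [interior_Ioi] at hp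
    · exact (hd p hp).hasDerivWithinAt
    · exact h0 p hp
  have hemono : MonotoneOn e (Ioi 0) := mono_of hed he'0
  have hmmono : MonotoneOn m (Ioi 0) := mono_of hmd fun p hp => (hm'0 p hp).le
  have hh0 : ∀ p, 0 < p → 0 < h p := fun p hp => arctan_pos.2 (hm0 p hp)
  have hh1 : ∀ p, h p < π / 2 := fun p => arctan_lt_pi_div_two _
  have he_up : ∀ p, 0 < p → e p ≤ π / 2 - c * α := by
    intro p hp
    refine ge_of_tendsto (tendsto_const_nhds.sub (hFt.const_mul c)) (b := e p) ?_
    filter_upwards [eventually_ge_atTop p] with r hr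
    have := hemono hp (hp.trans_le hr : 0 < r) hr
    have := hh1 r
    simp only [he] at *
    linarith
  have he_lo : ∀ p, 0 < p → 0 ≤ e p := by
    intro p hp
    have h1 : Tendsto (fun r => - (c * F r)) (𝓝[>] 0) (𝓝 (-(c * F 0))) :=
      ((hFd 0).continuousAt.tendsto.const_mul c).neg.mono_left nhdsWithin_le_nhds
    rw [hF0, mul_zero, neg_zero] at h1
    refine le_of_tendsto h1 (b := e p) ?_
    filter_upwards [Ioo_mem_nhdsGT hp] with r hr
    have := hemono hr.1 hp hr.2.le
    have := hh0 r hr.1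
    simp only [he] at *
    linarith
  refine ⟨by linarith [he_up 1 one_pos, he_lo 1 one_pos], fun d hd hD => ?_⟩
  -- the point where the mean slope is one
  obtain ⟨p₀, hp₀, hmp₀⟩ : ∃ p₀, 0 < p₀ ∧ m p₀ = 1 := by
    have h1 : 0 < min 1 (1 / S 1) := lt_min one_pos (one_div_pos.2 (hS0 1 one_pos))
    have hcont : ContinuousOn m (Icc (min 1 (1 / S 1)) (max 1 (1 / S 1))) := fun r hr =>
      (hmd r (h1.trans_le hr.1)).continuousAt.continuousWithinAt
    have hlo : m (min 1 (1 / S 1)) ≤ 1 := by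
      rw [← abs_of_pos (hm0 _ h1), ← sq_le_one_iff_abs_le_one, hm2 _ h1]
      calc _ ≤ 1 / S 1 * S 1 := mul_le_mul (min_le_right _ _)
            (hSm h1 (mem_Ioi.2 one_pos) (min_le_left _ _)) (hS0 _ h1).le
            (one_div_pos.2 (hS0 1 one_pos)).le
        _ = 1 := one_div_mul_cancel (hS0 1 one_pos).ne'
    have h2 : 0 < max 1 (1 / S 1) := one_pos.trans_le (le_max_left _ _)
    have hhi : 1 ≤ m (max 1 (1 / S 1)) := by
      rw [← abs_of_pos (hm0 _ h2), ← one_le_sq_iff_one_le_abs, hm2 _ h2]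
      calc 1 = 1 / S 1 * S 1 := (one_div_mul_cancel (hS0 1 one_pos).ne').symm
        _ ≤ _ := mul_le_mul (le_max_right _ _)
            (hSm (mem_Ioi.2 one_pos) h2 (le_max_left _ _)) (hS0 _ one_pos).le h2.le
    obtain ⟨p₀, hp, hp'⟩ := intermediate_value_Icc (min_le_max) hcont ⟨hlo, hhi⟩
    exact ⟨p₀, h1.trans_le hp.1, hp'⟩
  refine ⟨1 / p₀, one_div_pos.2 hp₀, ?_⟩
  -- this `l` minimizes `l * d + (π / 2) / (2 * l)`, the bound for the variation of `w` below
  set l := √(π / (4 * d)) with hl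
  have hl0 : 0 < l := Real.sqrt_pos.2 (by positivity)
  have hl2 : l ^ 2 * (4 * d) = π := by rw [hl, Real.sq_sqrt (by positivity)]; field_simp
  have hsum : l * d + π / 2 / (2 * l) = √(π * d) := by
    symm
    rw [Real.sqrt_eq_iff_mul_self_eq (by positivity) (by positivity)]
    rw [← hl2]; field_simp; ring
  -- Cauchy–Schwarz in differential form: by the identity above, the derivative of `m` minus
  -- `m / s` is a geometric mean in absolute value, and the derivative of `w` dominates it as a
  -- weighted arithmetic mean
  set w : ℝ → ℝ := fun p => l * e p + h p / (2 * l) with hw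
  set w' : ℝ → ℝ := fun p => l * e' p + m' p / (1 + m p ^ 2) / (2 * l) with hw'
  have hwd : ∀ p, 0 < p → HasDerivAt w (w' p) p := fun p hp =>
    ((hed p hp).const_mul l).add ((hhd p hp).div_const _)
  have hw'b : ∀ s, 0 < s → |m' s - m s / s| / (1 + m s ^ 2) ≤ w' s := by
    intro s hs
    have h1 : 0 < 1 + m s ^ 2 := by positivity
    have h2 : |m' s - m s / s| ≤ l * (m' s - q s) + m' s / (2 * l) := by
      have h3 : 0 ≤ l * (m' s - q s) := mul_nonneg hl0.le (sub_nonneg.2 (hqm s hs))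
      have h4 : 0 ≤ m' s / (2 * l) := by have := hm'0 s hs; positivity
      refine abs_le_of_sq_le_sq ?_ (by linarith)
      rw [← hkey s hs]
      have h5 : (l * (m' s - q s)) * (m' s / (2 * l)) = (m' s - q s) * m' s / 2 := by
        field_simp
      nlinarith [sq_nonneg (l * (m' s - q s) - m' s / (2 * l)), hqm s hs, hq0 s]
    calc _ ≤ (l * (m' s - q s) + m' s / (2 * l)) / (1 + m s ^ 2) := by gcongr
      _ = l * ((m' s - q s) / (1 + m s ^ 2)) + m' s / (1 + m s ^ 2) / (2 * l) := by
        field_simp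
      _ ≤ _ := by simp only [hw']; gcongr; exact he'le s hs
  have hwinc : ∀ p r, 0 < p → 0 < r → w r - w p ≤ √(π * d) := by
    intro p r hp hr
    rw [← hsum]
    have h1 : l * (e r - e p) ≤ l * d :=
      mul_le_mul_of_nonneg_left (by linarith [he_up r hr, he_lo p hp]) hl0.le
    have h2 : (h r - h p) / (2 * l) ≤ π / 2 / (2 * l) := by
      gcongr; linarith [hh1 r, hh0 p hp]
    simp only [hw]
    have : l * e r + h r / (2 * l) - (l * e p + h p / (2 * l))
      = l * (e r - e p) + (h r - h p) / (2 * l) := by ring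
    linarith
  have hcomp : ∀ p, 0 < p → |h p - arctan (1 / p₀ * p)| ≤ √(π * d) := by
    intro p hp
    -- freeze the outer slope `p` and let only the ratio `m s / s` vary
    set G : ℝ → ℝ := fun s => arctan (p * (m s / s)) with hG
    set G' : ℝ → ℝ := fun s => 1 / (1 + (p * (m s / s)) ^ 2) *
      (p * ((m' s * s - m s * 1) / s ^ 2)) with hG'
    have hGd : ∀ s, 0 < s → HasDerivAt G (G' s) s := fun s hs =>
      (((hmd s hs).div (hasDerivAt_id s) hs.ne').const_mul p).arctan
    have hGp : G p = h p := by simp only [hG, hh]; congr 1; field_simp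
    have hGp₀ : G p₀ = arctan (1 / p₀ * p) := by simp only [hG]; rw [hmp₀, mul_comm]
    have hG'b : ∀ s, 0 < s → (p ≤ s ∧ s ≤ p₀ ∨ p₀ ≤ s ∧ s ≤ p) → |G' s| ≤ w' s := by
      intro s hs hor
      refine le_trans ?_ (hw'b s hs)
      have h1 : G' s = (p / s / (1 + (p * (m s / s)) ^ 2)) * (m' s - m s / s) := by
        simp only [hG']; field_simp
      rw [h1, abs_mul, abs_of_pos (by positivity), div_eq_mul_inv |m' s - m s / s|, mul_comm]
      refine mul_le_mul_of_nonneg_left ?_ (abs_nonneg _)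
      rw [inv_eq_one_div, div_div, div_le_div_iff₀ (by positivity) (by positivity)]
      have h2 : 0 ≤ (s - p) * (1 - m s ^ 2 * (p / s)) := by
        rcases hor with ⟨ha, hb⟩ | ⟨ha, hb⟩
        · have h3 : m s ≤ 1 := hmp₀ ▸ hmmono hs hp₀ hb
          have h4 : p / s ≤ 1 := (div_le_one hs).2 ha
          have h5 : m s ^ 2 ≤ 1 := pow_le_one₀ (hm0 s hs).le h3
          refine mul_nonneg (sub_nonneg.2 ha) (sub_nonneg.2 ?_)
          exact mul_le_one₀ h5 (by positivity) h4
        · have h3 : 1 ≤ m s := hmp₀ ▸ hmmono hp₀ hs ha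
          have h4 : 1 ≤ p / s := (one_le_div hs).2 hb
          refine mul_nonneg_of_nonpos_of_nonpos (sub_nonpos.2 hb) (sub_nonpos.2 ?_)
          exact one_le_mul_of_one_le_of_one_le (one_le_pow₀ h3) h4
      have h6 : s * (1 + (p * (m s / s)) ^ 2) - p * (1 + m s ^ 2)
          = (s - p) * (1 - m s ^ 2 * (p / s)) := by field_simp; ring
      linarith
    have key : ∀ a b, 0 < a → a ≤ b → (∀ s ∈ Icc a b, |G' s| ≤ w' s) →
        |G b - G a| ≤ √(π * d) := by
      intro a b ha hab hb
      have aux {u u' : ℝ → ℝ} (hd : ∀ p, 0 < p → HasDerivAt u (u' p) p)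
          (h0 : ∀ p ∈ Icc a b, 0 ≤ u' p) : u a ≤ u b := by
        refine monotoneOn_of_hasDerivWithinAt_nonneg (convex_Icc a b)
          (fun p hp => (hd p (ha.trans_le hp.1)).continuousAt.continuousWithinAt) (f' := u')
          (fun p hp => ?_) (fun p hp => ?_) (left_mem_Icc.2 hab) (right_mem_Icc.2 hab) hab <;>
          have hp' := interior_subset hp
        · exact (hd p (ha.trans_le hp'.1)).hasDerivWithinAt
        · exact h0 p hp'
      have h1 := aux (u := fun s => w s - G s) (fun p hp => (hwd p hp).sub (hGd p hp))
        fun s hs => by linarith [(abs_le.1 (hb s hs)).2]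
      have h2 := aux (u := fun s => w s + G s) (fun p hp => (hwd p hp).add (hGd p hp))
        fun s hs => by linarith [(abs_le.1 (hb s hs)).1]
      have h3 := hwinc a b ha (ha.trans_le hab)
      rw [abs_le]; constructor <;> linarith
    rw [← hGp, ← hGp₀]
    rcases le_total p p₀ with hpp | hpp
    · rw [abs_sub_comm]
      exact key p p₀ hp hpp fun s hs => hG'b s (hp.trans_le hs.1) (Or.inl hs)
    · exact key p₀ p hp₀ hpp fun s hs => hG'b s (hp₀.trans_le hs.1) (Or.inr hs)
  intro p hp
  rcases hp.eq_or_lt with rfl | hp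
  · simp; positivity
  have h1 := hcomp p hp
  have h2 := he_lo p hp
  have h3 := he_up p hp
  have h4 : c * F p - arctan (1 / p₀ * p) = (h p - arctan (1 / p₀ * p)) - e p := by
    simp only [he]; ring
  change |c * F p - _| ≤ _
  rw [h4]
  refine (abs_sub _ _).trans ?_
  rw [abs_of_nonneg h2]
  linarith

/-! ### From sector areas to gauges -/

/-- Up to `η`, twice the area of the sector of `{N ≤ 1}` with slopes in `[0, p]`, where `f t = N 1 t`
and `N` is a gauge, is what it would be for the ellipse `x²/ρ + ρ y² ≤ 1`. -/
def SectorClose (f : ℝ → ℝ) (ρ η : ℝ) : Prop :=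
  ∀ p, 0 ≤ p → |(∫ t in (0:ℝ)..p, (f t ^ 2)⁻¹) - arctan (ρ * p)| ≤ η

theorem continuous_inv_one_add_sq : Continuous fun t : ℝ => (1 + t ^ 2)⁻¹ :=
  Continuous.inv₀ (by fun_prop) (fun t => by positivity)

theorem arctan_sub_ge {a b : ℝ} (ha : 0 ≤ a) (hab : a ≤ b) (hb : b ≤ 4) :
    (b - a) / 17 ≤ arctan b - arctan a := by
  rw [← integral_inv_one_add_sq]
  have h : ∫ _t in a..b, ((17:ℝ))⁻¹ ≤ ∫ t in a..b, (1 + t ^ 2)⁻¹ := by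
    refine intervalIntegral.integral_mono_on hab (by simp) ?_ ?_
    · exact continuous_inv_one_add_sq.intervalIntegrable _ _
    · intro t ht
      gcongr
      nlinarith [ht.1, ht.2]
  rw [intervalIntegral.integral_const, smul_eq_mul] at h
  rwa [div_eq_mul_inv]

theorem integral_le_arctan {f : ℝ → ℝ} (hf : Continuous f) (hf0 : ∀ t, 0 < f t) {a b κ : ℝ}
    (hab : a ≤ b) (hκ : 0 < κ) (h : ∀ s ∈ Icc a b, κ * (1 + s ^ 2) ≤ f s ^ 2) :
    ∫ t in a..b, (f t ^ 2)⁻¹ ≤ κ⁻¹ * (arctan b - arctan a) := by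
  rw [← integral_inv_one_add_sq, ← intervalIntegral.integral_const_mul]
  refine intervalIntegral.integral_mono_on hab ?_ ?_ ?_
  · exact ((hf.pow 2).inv₀ fun t => (pow_pos (hf0 t) 2).ne').intervalIntegrable _ _
  · exact (continuous_const.mul continuous_inv_one_add_sq).intervalIntegrable _ _
  · intro t ht
    rw [← mul_inv]
    exact inv_anti₀ (by positivity) (h t ht)

theorem arctan_le_integral {f : ℝ → ℝ} (hf : Continuous f) (hf0 : ∀ t, 0 < f t) {a b κ : ℝ}
    (hab : a ≤ b) (h : ∀ s ∈ Icc a b, f s ^ 2 ≤ κ * (1 + s ^ 2)) :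
    κ⁻¹ * (arctan b - arctan a) ≤ ∫ t in a..b, (f t ^ 2)⁻¹ := by
  rw [← integral_inv_one_add_sq, ← intervalIntegral.integral_const_mul]
  refine intervalIntegral.integral_mono_on hab ?_ ?_ ?_
  · exact (continuous_const.mul continuous_inv_one_add_sq).intervalIntegrable _ _
  · exact ((hf.pow 2).inv₀ fun t => (pow_pos (hf0 t) 2).ne').intervalIntegrable _ _
  · intro t ht
    rw [← mul_inv]
    exact inv_anti₀ (pow_pos (hf0 t) 2) (h t ht)

theorem SectorClose.increment {f : ℝ → ℝ} (hf : Continuous f) (hf0 : ∀ t, 0 < f t) {η : ℝ}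
    (h : SectorClose f 1 η) {a b : ℝ} (ha : 0 ≤ a) (hb : 0 ≤ b) :
    |(∫ t in a..b, (f t ^ 2)⁻¹) - (arctan b - arctan a)| ≤ 2 * η := by
  have hc : Continuous fun t => (f t ^ 2)⁻¹ :=
    (hf.pow 2).inv₀ fun t => (pow_pos (hf0 t) 2).ne'
  have h1 := h a ha
  have h2 := h b hb
  rw [one_mul] at h1 h2
  rw [← intervalIntegral.integral_interval_sub_left (hc.intervalIntegrable 0 b)
    (hc.intervalIntegrable 0 a)]
  rw [abs_le] at *
  constructor <;> linarith [h1.1, h1.2, h2.1, h2.2]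

/-- The diagonal map of determinant one that sends slopes `t` to `σ * t` changes the parameter `ρ`
to `ρ / σ`. -/
theorem SectorClose.scale {f : ℝ → ℝ} {ρ σ η : ℝ} (hσ : 0 < σ)
    (h : SectorClose f ρ η) : SectorClose (fun t => √σ * f (t / σ)) (ρ / σ) η := by
  intro p hp
  have h1 := h (p / σ) (div_nonneg hp hσ.le)
  have h2 : (∫ t in (0:ℝ)..p, ((√σ * f (t / σ)) ^ 2)⁻¹)
      = ∫ t in (0:ℝ)..(p / σ), (f t ^ 2)⁻¹ := by
    have := intervalIntegral.integral_comp_div (a := 0) (b := p) (fun t => (f t ^ 2)⁻¹) hσ.ne'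
    rw [zero_div, smul_eq_mul] at this
    rw [← inv_mul_eq_iff_eq_mul₀ hσ.ne'] at this
    rw [← this, ← intervalIntegral.integral_const_mul]
    congr 1; ext t
    rw [mul_pow, Real.sq_sqrt hσ.le, mul_inv]
  rw [h2]
  have h3 : ρ / σ * p = ρ * (p / σ) := by ring
  rw [h3]; exact h1

theorem sqrt_one_add_sq_le {a b : ℝ} (hab : a ≤ b) :
    √(1 + b ^ 2) ≤ (1 + (b - a)) * √(1 + a ^ 2) := by
  have h1 : 1 ≤ √(1 + a ^ 2) := Real.one_le_sqrt.2 (by nlinarith)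
  have h2 : a ≤ √(1 + a ^ 2) := Real.le_sqrt_of_sq_le (by linarith)
  have h3 : √(1 + a ^ 2) ^ 2 = 1 + a ^ 2 := Real.sq_sqrt (by positivity)
  rw [Real.sqrt_le_left (by nlinarith)]
  rw [mul_pow, h3]
  have hx : 0 ≤ b - a := sub_nonneg.2 hab
  nlinarith [mul_nonneg hx (sq_nonneg (a-1)), mul_nonneg hx hx, mul_nonneg (mul_nonneg hx hx) (sq_nonneg a)]

section
variable {f : ℝ → ℝ} {η Δ : ℝ}

/-- Among the slopes of any interval `[t, t + Δ]` with `t` in `[0, 3]` there is one at which `f` is not much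
larger than for the disc; otherwise the sector over that interval would be too small. -/
theorem SectorClose.exists_le (hf : Continuous f) (hf0 : ∀ t, 0 < f t) (hΔ : 0 < Δ)
    (hΔ1 : Δ ≤ 1 / 100) (hη : η < Δ ^ 2 / 40) (h : SectorClose f 1 η) {t : ℝ} (ht : 0 ≤ t)
    (ht3 : t ≤ 3) : ∃ s ∈ Icc t (t + Δ), f s ≤ (1 + Δ) * √(1 + s ^ 2) := by
  by_contra! hcon
  have h1 : ∫ r in t..(t + Δ), (f r ^ 2)⁻¹
      ≤ ((1 + Δ) ^ 2)⁻¹ * (arctan (t + Δ) - arctan t) := by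
    refine integral_le_arctan hf hf0 (by linarith) (by positivity) fun s hs => ?_
    have := pow_le_pow_left₀ (by positivity) (hcon s hs).le 2
    rwa [mul_pow, Real.sq_sqrt (by positivity)] at this
  have h2 := (abs_le.1 (h.increment hf hf0 ht (by linarith : 0 ≤ t + Δ))).1
  have h3 := arctan_sub_ge ht (by linarith : t ≤ t + Δ) (by linarith)
  rw [add_sub_cancel_left] at h3
  set a := arctan (t + Δ) - arctan t
  have h4 : ((1 + Δ) ^ 2)⁻¹ ≤ 1 - Δ := by
    rw [inv_le_iff_one_le_mul₀ (by positivity)]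
    nlinarith [mul_pos hΔ hΔ, mul_pos (mul_pos hΔ hΔ) hΔ]
  nlinarith [mul_le_mul_of_nonneg_right h4 (by linarith [div_pos hΔ (by norm_num : (0:ℝ) < 17)] : 0 ≤ a)]

theorem convexOn_le_of_mem_Icc {f : ℝ → ℝ} (hfc : ConvexOn ℝ univ f) {a b r B : ℝ}
    (hr : r ∈ Icc a b) (ha : f a ≤ B) (hb : f b ≤ B) : f r ≤ B :=
  (hfc.le_max_of_mem_Icc (mem_univ a) (mem_univ b) hr).trans (max_le ha hb)

/-- If `f` were much smaller than for the disc at `t`, convexity would keep it small on an interval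
of length `Δ / 2`, and the sector over that interval would be too large. -/
theorem SectorClose.lower (hf : Continuous f) (hf0 : ∀ t, 0 < f t) (hfc : ConvexOn ℝ univ f)
    (hΔ : 0 < Δ) (hΔ1 : Δ ≤ 1 / 100) (hη : η < Δ ^ 2 / 40) (h : SectorClose f 1 η) {t : ℝ}
    (ht : 0 ≤ t) (ht1 : t ≤ 1) : (1 - 8 * Δ) * √(1 + t ^ 2) ≤ f t := by
  by_contra! hcon
  set ω := √(1 + t ^ 2) with hω
  have hω1 : 1 ≤ ω := Real.one_le_sqrt.2 (by nlinarith)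
  obtain ⟨s, hs, hfs⟩ := h.exists_le hf hf0 hΔ hΔ1 hη (by linarith : 0 ≤ t + Δ) (by linarith)
  have h1 : f s ≤ (1 + 4 * Δ) * ω := by
    have h2 := sqrt_one_add_sq_le (by linarith [hs.1] : t ≤ s)
    have h3 : √(1 + s ^ 2) ≤ (1 + 2 * Δ) * ω := by
      refine h2.trans ?_
      gcongr; linarith [hs.2]
    calc f s ≤ (1 + Δ) * ((1 + 2 * Δ) * ω) := hfs.trans (by gcongr)
      _ = ((1 + Δ) * (1 + 2 * Δ)) * ω := by ring
      _ ≤ _ := by gcongr; nlinarith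
  -- near `t` the convex function `f` stays below the chord from `t` to `s`
  have hmid : f ((t + s) / 2) ≤ (1 - 2 * Δ) * ω := by
    have := hfc.2 (mem_univ t) (mem_univ s) (by norm_num : (0:ℝ) ≤ 1/2) (by norm_num : (0:ℝ) ≤ 1/2)
      (by norm_num)
    simp only [smul_eq_mul] at this
    rw [show (1:ℝ) / 2 * t + 1 / 2 * s = (t + s) / 2 by ring] at this
    linarith
  have h5 : (1 - 2 * Δ) ^ 2 ≠ 0 := by nlinarith
  have h4 : ((1 - 2 * Δ) ^ 2)⁻¹ * (arctan (t + Δ / 2) - arctan t)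
      ≤ ∫ r in t..(t + Δ / 2), (f r ^ 2)⁻¹ := by
    refine arctan_le_integral hf hf0 (by linarith) fun r hr => ?_
    have hr1 : f r ≤ (1 - 2 * Δ) * ω :=
      convexOn_le_of_mem_Icc hfc (⟨hr.1, by linarith [hr.2, hs.1]⟩ : r ∈ Icc t ((t + s) / 2))
        (hcon.le.trans (by gcongr; linarith)) hmid
    have h6 := pow_le_pow_left₀ (hf0 r).le hr1 2
    rw [mul_pow, Real.sq_sqrt (by positivity)] at h6
    refine h6.trans ?_
    gcongr
    exact hr.1
  have h2 := (abs_le.1 (h.increment hf hf0 ht (by linarith : 0 ≤ t + Δ / 2))).2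
  have h3 := arctan_sub_ge ht (by linarith : t ≤ t + Δ / 2) (by linarith)
  rw [add_sub_cancel_left] at h3
  set a := arctan (t + Δ / 2) - arctan t
  have h7 : 1 + 4 * Δ ≤ ((1 - 2 * Δ) ^ 2)⁻¹ := by
    rw [le_inv_comm₀ (by positivity) (by positivity), inv_eq_one_div, le_div_iff₀ (by positivity)]
    nlinarith [mul_pos hΔ hΔ, mul_pos (mul_pos hΔ hΔ) hΔ]
  nlinarith [mul_le_mul_of_nonneg_right h7 (by linarith [div_pos hΔ (by norm_num : (0:ℝ) < 17)] : 0 ≤ a)]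

/-- The value at slope `0`, bounded by interpolating between a slope `s ≤ Δ` in one quadrant and a
slope `-w` with `1 ≤ w * ρ` in the adjacent one. With the lower bound for the adjacent quadrant at
slope `0`, it bounds its parameter `ρ`, assumed at most `1`, from below. -/
theorem SectorClose.axis_aux (hf : Continuous f) (hf0 : ∀ t, 0 < f t) (hfc : ConvexOn ℝ univ f)
    (hΔ : 0 < Δ) (hΔ1 : Δ ≤ 1 / 100) (hη : η < Δ ^ 2 / 40) (h : SectorClose f 1 η) {ρ : ℝ}
    (hρ : 0 < ρ) (hρ1 : ρ ≤ 1) (h' : SectorClose (fun t => f (-t)) ρ η) :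
    f 0 ≤ 1 + 6 * Δ ∧ 1 - 14 * Δ ≤ √ρ := by
  have hsρ : 0 < √ρ := Real.sqrt_pos.2 hρ
  have hsρ2 : √ρ ^ 2 = ρ := Real.sq_sqrt hρ.le
  have hsρ1 : √ρ ≤ 1 := Real.sqrt_le_one.2 hρ1
  have hg := h'.scale hρ
  rw [div_self hρ.ne'] at hg
  have hgc : Continuous fun t => √ρ * f (-(t / ρ)) := by fun_prop
  have hg0 : ∀ t, 0 < √ρ * f (-(t / ρ)) := fun t => mul_pos hsρ (hf0 _)
  have hgcv : ConvexOn ℝ univ fun t => √ρ * f (-(t / ρ)) := by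
    refine ⟨convex_univ, fun x _ y _ a b ha hb hab => ?_⟩
    have := hfc.2 (mem_univ (-(x / ρ))) (mem_univ (-(y / ρ))) ha hb hab
    simp only [smul_eq_mul] at *
    rw [show -((a * x + b * y) / ρ) = a * -(x / ρ) + b * -(y / ρ) by ring]
    nlinarith [mul_le_mul_of_nonneg_left this hsρ.le]
  have hlow := hg.lower hgc hg0 hgcv hΔ hΔ1 hη le_rfl zero_le_one
  simp only [zero_div, neg_zero] at hlow
  rw [zero_pow two_ne_zero, add_zero, Real.sqrt_one, mul_one] at hlow
  obtain ⟨s, hs, hfs⟩ := h.exists_le hf hf0 hΔ hΔ1 hη le_rfl (by norm_num)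
  obtain ⟨t, ht, hft⟩ := hg.exists_le hgc hg0 hΔ hΔ1 hη zero_le_one (by norm_num)
  simp only [zero_add] at hs
  have hs1 : f s ≤ 1 + 3 * Δ := by
    have := sqrt_one_add_sq_le hs.1
    rw [zero_pow two_ne_zero, add_zero, Real.sqrt_one, mul_one, sub_zero] at this
    nlinarith [hs.1, hs.2]
  have ht3 : √ρ * f (-(t / ρ)) ≤ 3 := by
    have : √(1 + t ^ 2) ≤ 2 := by
      rw [Real.sqrt_le_left (by norm_num)]; nlinarith [ht.1, ht.2]
    nlinarith
  set w := t / ρ with hw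
  have hw0 : 0 < w := div_pos (by linarith [ht.1]) hρ
  have hwρ : 1 ≤ w * ρ := by rw [hw, div_mul_cancel₀ _ hρ.ne']; exact ht.1
  have hf00 : f 0 ≤ 1 + 6 * Δ := by
    have hws : 0 < w + s := by linarith [hs.1]
    have := hfc.2 (mem_univ s) (mem_univ (-w)) (div_nonneg hw0.le hws.le)
      (div_nonneg hs.1 hws.le) (by field_simp)
    simp only [smul_eq_mul] at this
    rw [show w / (w + s) * s + s / (w + s) * -w = 0 by ring] at this
    have h1 : w / (w + s) * f s ≤ f s :=
      mul_le_of_le_one_left (hf0 s).le ((div_le_one hws).2 (by linarith [hs.1]))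
    have h2 : s / (w + s) * f (-w) ≤ 3 * Δ := by
      rw [div_mul_eq_mul_div, div_le_iff₀ hws]
      have h3 : s * f (-w) ≤ Δ * f (-w) := mul_le_mul_of_nonneg_right hs.2 (hf0 _).le
      have h4 : f (-w) ≤ 3 * w := by
        have h5 : f (-w) ≤ 3 / √ρ := by rw [le_div_iff₀ hsρ]; linarith
        refine h5.trans ?_
        rw [div_le_iff₀ hsρ]
        nlinarith [mul_le_mul_of_nonneg_left hsρ1 (mul_pos hw0 hsρ).le]
      nlinarith [mul_le_mul_of_nonneg_left h4 hΔ.le, mul_nonneg hΔ.le hs.1]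
    linarith
  refine ⟨hf00, ?_⟩
  have : 1 - 8 * Δ ≤ √ρ * (1 + 6 * Δ) := hlow.trans (mul_le_mul_of_nonneg_left hf00 hsρ.le)
  nlinarith

/-- Two adjacent quadrants, the first normalized to parameter `1`: the parameters nearly agree, and
on the slopes `[0, 1]` of the first quadrant `f` is uniformly close to the gauge of the disc. -/
theorem SectorClose.half_plane_one (hf : Continuous f) (hf0 : ∀ t, 0 < f t)
    (hfc : ConvexOn ℝ univ f)
    (hΔ : 0 < Δ) (hΔ1 : Δ ≤ 1 / 100) (hη : η < Δ ^ 2 / 40) (h : SectorClose f 1 η) {ρ : ℝ}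
    (hρ : 0 < ρ) (h' : SectorClose (fun t => f (-t)) ρ η) :
    1 - 14 * Δ ≤ √ρ ∧ √ρ * (1 - 14 * Δ) ≤ 1 ∧ ∀ t, 0 ≤ t → t ≤ 1 →
      (1 - 8 * Δ) * √(1 + t ^ 2) ≤ f t ∧ f t ≤ (1 + 6 * Δ) * √(1 + t ^ 2) := by
  have hsρ : 0 < √ρ := Real.sqrt_pos.2 hρ
  have hsρ2 : √ρ ^ 2 = ρ := Real.sq_sqrt hρ.le
  have hax : f 0 ≤ 1 + 6 * Δ ∧ 1 - 14 * Δ ≤ √ρ ∧ √ρ * (1 - 14 * Δ) ≤ 1 := by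
    rcases le_total ρ 1 with hρ1 | hρ1
    · obtain ⟨h1, h2⟩ := h.axis_aux hf hf0 hfc hΔ hΔ1 hη hρ hρ1 h'
      have : √ρ ≤ 1 := Real.sqrt_le_one.2 hρ1
      exact ⟨h1, h2, by nlinarith⟩
    · have hsρ1 : 1 ≤ √ρ := Real.one_le_sqrt.2 hρ1
      have hg := h'.scale hρ
      rw [div_self hρ.ne'] at hg
      have hgc : Continuous fun t => √ρ * f (-(t / ρ)) := by fun_prop
      have hg0 : ∀ t, 0 < √ρ * f (-(t / ρ)) := fun t => mul_pos hsρ (hf0 _)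
      have hgcv : ConvexOn ℝ univ fun t => √ρ * f (-(t / ρ)) := by
        refine ⟨convex_univ, fun x _ y _ a b ha hb hab => ?_⟩
        have := hfc.2 (mem_univ (-(x / ρ))) (mem_univ (-(y / ρ))) ha hb hab
        simp only [smul_eq_mul] at *
        rw [show -((a * x + b * y) / ρ) = a * -(x / ρ) + b * -(y / ρ) by ring]
        nlinarith [mul_le_mul_of_nonneg_left this hsρ.le]
      have hg' : SectorClose (fun t => √ρ * f (-(-t / ρ))) (1 / ρ) η := by
        have := h.scale hρ
        simpa only [neg_div, neg_neg] using this
      obtain ⟨h1, h2⟩ := hg.axis_aux hgc hg0 hgcv hΔ hΔ1 hη (one_div_pos.2 hρ)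
        ((div_le_one hρ).2 hρ1) hg'
      simp only [zero_div, neg_zero] at h1
      refine ⟨by nlinarith [hf0 0], by linarith, ?_⟩
      rw [Real.sqrt_div zero_le_one, Real.sqrt_one, le_div_iff₀ hsρ] at h2
      linarith
  refine ⟨hax.2.1, hax.2.2, fun t ht ht1 =>
    ⟨h.lower hf hf0 hfc hΔ hΔ1 hη ht ht1, ?_⟩⟩
  have hup : ∀ t, Δ ≤ t → t ≤ 1 → f t ≤ (1 + 3 * Δ) * √(1 + t ^ 2) := by
    intro t ht ht1
    obtain ⟨a, ha, hfa⟩ := h.exists_le hf hf0 hΔ hΔ1 hη (by linarith : 0 ≤ t - Δ) (by linarith)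
    obtain ⟨b, hb, hfb⟩ := h.exists_le hf hf0 hΔ hΔ1 hη (by linarith : 0 ≤ t) (by linarith)
    have hω1 : 0 < √(1 + t ^ 2) := Real.sqrt_pos.2 (by positivity)
    have h3 : (1 + Δ) * ((1 + Δ) * √(1 + t ^ 2)) ≤ (1 + 3 * Δ) * √(1 + t ^ 2) := by
      rw [← mul_assoc]; gcongr; nlinarith
    refine convexOn_le_of_mem_Icc hfc (⟨by linarith [ha.2], hb.1⟩ : t ∈ Icc a b) ?_ ?_
    · refine (hfa.trans ?_).trans h3
      gcongr
      have : √(1 + a ^ 2) ≤ √(1 + t ^ 2) := by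
        gcongr
        · linarith [ha.1]
        · linarith [ha.2]
      nlinarith
    · refine (hfb.trans ?_).trans h3
      gcongr
      refine (sqrt_one_add_sq_le hb.1).trans ?_
      gcongr; linarith [hb.2]
  have hω1 : 1 ≤ √(1 + t ^ 2) := Real.one_le_sqrt.2 (by nlinarith)
  rcases le_total Δ t with hΔt | hΔt
  · refine (hup t hΔt ht1).trans ?_
    gcongr; norm_num
  · have h1 := hup Δ le_rfl (by linarith)
    have h2 := sqrt_one_add_sq_le hΔ.le
    rw [zero_pow two_ne_zero, add_zero, Real.sqrt_one, mul_one, sub_zero] at h2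
    have h3 : f t ≤ 1 + 6 * Δ :=
      convexOn_le_of_mem_Icc hfc ⟨ht, hΔt⟩ hax.1 (by nlinarith)
    nlinarith

/-- Two adjacent quadrants with arbitrary parameters, reduced to `SectorClose.half_plane_one` by
scaling. The slopes `t > 1 / ρ` are covered by the same result with the coordinates exchanged. -/
theorem SectorClose.half_plane (hf : Continuous f) (hf0 : ∀ t, 0 < f t)
    (hfc : ConvexOn ℝ univ f) (hΔ : 0 < Δ) (hΔ1 : Δ ≤ 1 / 100) (hη : η < Δ ^ 2 / 40) {ρ σ : ℝ}
    (hρ : 0 < ρ) (hσ : 0 < σ) (h : SectorClose f ρ η) (h' : SectorClose (fun t => f (-t)) σ η) :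
    √ρ * (1 - 14 * Δ) ≤ √σ ∧ √σ * (1 - 14 * Δ) ≤ √ρ ∧ ∀ t, 0 ≤ t → t * ρ ≤ 1 →
      (1 - 8 * Δ) * √(1 / ρ + ρ * t ^ 2) ≤ f t ∧ f t ≤ (1 + 6 * Δ) * √(1 / ρ + ρ * t ^ 2) := by
  have hsρ : 0 < √ρ := Real.sqrt_pos.2 hρ
  have hsρ2 : √ρ ^ 2 = ρ := Real.sq_sqrt hρ.le
  have hg := h.scale hρ
  rw [div_self hρ.ne'] at hg
  have hg' := h'.scale hρ
  have hgc : Continuous fun t => √ρ * f (t / ρ) := by fun_prop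
  have hg0 : ∀ t, 0 < √ρ * f (t / ρ) := fun t => mul_pos hsρ (hf0 _)
  have hgcv : ConvexOn ℝ univ fun t => √ρ * f (t / ρ) := by
    refine ⟨convex_univ, fun x _ y _ a b ha hb hab => ?_⟩
    have := hfc.2 (mem_univ (x / ρ)) (mem_univ (y / ρ)) ha hb hab
    simp only [smul_eq_mul] at *
    rw [show (a * x + b * y) / ρ = a * (x / ρ) + b * (y / ρ) by ring]
    nlinarith [mul_le_mul_of_nonneg_left this hsρ.le]
  obtain ⟨h1, h2, h3⟩ := hg.half_plane_one hgc hg0 hgcv hΔ hΔ1 hη (div_pos hσ hρ)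
    (by simpa only [neg_div] using hg')
  rw [Real.sqrt_div hσ.le] at h1 h2
  rw [le_div_iff₀ hsρ] at h1
  rw [div_mul_eq_mul_div, div_le_one hsρ] at h2
  refine ⟨by linarith, h2, fun t ht ht1 => ?_⟩
  have h4 := h3 (t * ρ) (by positivity) ht1
  rw [mul_div_cancel_right₀ _ hρ.ne'] at h4
  have h5 : √(1 + (t * ρ) ^ 2) = √ρ * √(1 / ρ + ρ * t ^ 2) := by
    rw [← Real.sqrt_mul hρ.le]; congr 1; field_simp
  rw [h5] at h4
  constructor
  · refine le_of_mul_le_mul_left ?_ hsρ; linarith [h4.1]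
  · refine le_of_mul_le_mul_left ?_ hsρ; linarith [h4.2]
end

/-! ### Area of a quadrant of a gauge body -/

/-- The gauge function of a planar convex body containing the origin in its interior, as a function
of the two coordinates. -/
structure IsPlaneGauge (N : ℝ → ℝ → ℝ) : Prop where
  cont : Continuous fun p : ℝ × ℝ => N p.1 p.2
  pos : ∀ x y, (x ≠ 0 ∨ y ≠ 0) → 0 < N x y
  homog : ∀ r x y, 0 ≤ r → N (r * x) (r * y) = r * N x y
  add_le : ∀ x y u w, N (x + u) (y + w) ≤ N x y + N u w

/-- The part of the unit body of `N` in the open first quadrant. -/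
def quadrantPart (N : ℝ → ℝ → ℝ) : Set (ℝ × ℝ) := {p | 0 < p.1 ∧ 0 < p.2 ∧ N p.1 p.2 ≤ 1}

theorem IsPlaneGauge.measurableSet_quadrantPart {N : ℝ → ℝ → ℝ} (hN : IsPlaneGauge N) :
    MeasurableSet (quadrantPart N) :=
  (measurableSet_lt measurable_const measurable_fst).inter
    ((measurableSet_lt measurable_const measurable_snd).inter
      (measurableSet_le hN.cont.measurable measurable_const))

theorem lintegral_ofReal_Ioc {b : ℝ} (hb : 0 ≤ b) :
    ∫⁻ x in Ioc 0 b, ENNReal.ofReal x = ENNReal.ofReal (b ^ 2 / 2) := by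
  rw [← ofReal_integral_eq_lintegral_ofReal]
  · rw [← intervalIntegral.integral_of_le hb, integral_id]
    congr 1; ring
  · exact (continuous_id.integrableOn_Icc).mono_set Ioc_subset_Icc_self
  · filter_upwards [ae_restrict_mem measurableSet_Ioc] with x hx using hx.1.le

/-- Area in the coordinates `(x, t)` with `y = t x`: the ray of slope `t` stays in the body for
`x ≤ 1 / N 1 t`, and the Jacobian is `x`. -/
theorem IsPlaneGauge.volume_quadrantPart {N : ℝ → ℝ → ℝ} (hN : IsPlaneGauge N) :
    volume (quadrantPart N) = ∫⁻ t in Ioi 0, ENNReal.ofReal ((N 1 t ^ 2)⁻¹ / 2) := by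
  have hms : MeasurableSet {q : ℝ × ℝ | 0 < q.2 ∧ 0 < q.1 ∧ q.1 * N 1 q.2 ≤ 1} := by
    refine (measurableSet_lt measurable_const measurable_snd).inter
      ((measurableSet_lt measurable_const measurable_fst).inter
      (measurableSet_le (measurable_fst.mul ?_) measurable_const))
    exact (hN.cont.comp (by fun_prop : Continuous fun q : ℝ × ℝ => ((1:ℝ), q.2))).measurable
  have h1 : volume (quadrantPart N) = ∫⁻ x, ∫⁻ t,
      ({q : ℝ × ℝ | 0 < q.2 ∧ 0 < q.1 ∧ q.1 * N 1 q.2 ≤ 1}).indicator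
        (fun q => ENNReal.ofReal q.1) (x, t) := by
    rw [Measure.volume_eq_prod, Measure.prod_apply hN.measurableSet_quadrantPart]
    refine lintegral_congr fun x => ?_
    by_cases hx : 0 < x
    · have : Prod.mk x ⁻¹' quadrantPart N = x • {t : ℝ | 0 < t ∧ x * N 1 t ≤ 1} := by
        ext y
        rw [mem_smul_set_iff_inv_smul_mem₀ hx.ne']
        simp only [quadrantPart, mem_preimage, mem_ofPred_eq, hx, true_and, smul_eq_mul]
        rw [← hN.homog _ _ _ hx.le]
        simp only [mul_one, ← mul_assoc, mul_inv_cancel₀ hx.ne', one_mul]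
        have : 0 < x⁻¹ * y ↔ 0 < y := by
          constructor
          · intro h; exact (pos_iff_pos_of_mul_pos h).1 (inv_pos.2 hx)
          · intro h; positivity
        rw [this]
      rw [this, Measure.addHaar_smul]
      have hm : MeasurableSet {t : ℝ | 0 < t ∧ x * N 1 t ≤ 1} := by
        refine (measurableSet_lt measurable_const measurable_id).inter
          (measurableSet_le (Measurable.const_mul ?_ x) measurable_const)
        exact (hN.cont.comp (by fun_prop : Continuous fun q : ℝ => ((1:ℝ), q))).measurable
      rw [← setLIntegral_one, ← lintegral_const_mul' _ _ ENNReal.ofReal_ne_top,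
        ← lintegral_indicator hm]
      refine lintegral_congr fun t => ?_
      simp only [indicator, mem_ofPred_eq, hx, true_and, Module.finrank_self, pow_one, abs_of_pos hx, mul_one]
    · have : Prod.mk x ⁻¹' quadrantPart N = ∅ := by
        ext y; simp [quadrantPart, hx]
      rw [this, measure_empty]
      simp [indicator, hx]
  rw [h1, lintegral_lintegral_swap, ← lintegral_indicator measurableSet_Ioi]
  · refine lintegral_congr fun t => ?_
    by_cases ht : 0 < t
    · have hp : 0 < N 1 t := hN.pos _ _ (Or.inl one_ne_zero)
      have : ∀ x, ({q : ℝ × ℝ | 0 < q.2 ∧ 0 < q.1 ∧ q.1 * N 1 q.2 ≤ 1}).indicator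
        (fun q => ENNReal.ofReal q.1) (x, t) = (Ioc 0 (N 1 t)⁻¹).indicator ENNReal.ofReal x := by
        intro x
        simp only [indicator, mem_ofPred_eq, ht, true_and, mem_Ioc, ← one_div, le_div_iff₀ hp]
      simp_rw [this]
      rw [lintegral_indicator measurableSet_Ioc, lintegral_ofReal_Ioc (by positivity)]
      simp [indicator, ht, inv_pow]
    · simp [indicator, ht]
  · refine Measurable.aemeasurable ?_
    exact (ENNReal.measurable_ofReal.comp measurable_fst).indicator hms

theorem IsPlaneGauge.swap {N : ℝ → ℝ → ℝ} (hN : IsPlaneGauge N) :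
    IsPlaneGauge (fun x y => N y x) where
  cont := hN.cont.comp continuous_swap
  pos x y h := hN.pos y x h.symm
  homog r x y hr := hN.homog r y x hr
  add_le x y x' y' := hN.add_le y x y' x'

theorem IsPlaneGauge.reflect {N : ℝ → ℝ → ℝ} (hN : IsPlaneGauge N) {σ τ : ℝ} (hσ : σ ≠ 0)
    (hτ : τ ≠ 0) : IsPlaneGauge (fun x y => N (σ * x) (τ * y)) where
  cont := hN.cont.comp (by fun_prop : Continuous fun p : ℝ × ℝ => (σ * p.1, τ * p.2))
  pos x y h := hN.pos _ _ (by simpa [hσ, hτ] using h)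
  homog r x y hr := by
    rw [← hN.homog _ _ _ hr]; congr 1 <;> ring
  add_le x y x' y' := by
    simpa only [mul_add] using hN.add_le (σ * x) (τ * y) (σ * x') (τ * y')

theorem IsPlaneGauge.continuous_slope {N : ℝ → ℝ → ℝ} (hN : IsPlaneGauge N) (σ : ℝ) :
    Continuous (fun t => N σ t) :=
  hN.cont.comp (by fun_prop : Continuous fun q : ℝ => (σ, q))

theorem IsPlaneGauge.convexOn_slope {N : ℝ → ℝ → ℝ} (hN : IsPlaneGauge N) (σ : ℝ) :
    ConvexOn ℝ univ (fun t => N σ t) := by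
  refine ⟨convex_univ, fun x _ y _ a b ha hb hab => ?_⟩
  have := hN.add_le (a * σ) (a * x) (b * σ) (b * y)
  rw [hN.homog _ _ _ ha, hN.homog _ _ _ hb, ← add_mul, hab, one_mul] at this
  simpa using this

theorem IsPlaneGauge.integrable_and_integral {N : ℝ → ℝ → ℝ} (hN : IsPlaneGauge N)
    (h : volume (quadrantPart N) ≠ ⊤) :
    IntegrableOn (fun t => (N 1 t ^ 2)⁻¹) (Ioi 0) ∧
      ∫ t in Ioi 0, (N 1 t ^ 2)⁻¹ = 2 * (volume (quadrantPart N)).toReal := by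
  have hp : ∀ t, 0 < N 1 t := fun t => hN.pos _ _ (Or.inl one_ne_zero)
  have hc : Continuous fun t => (N 1 t ^ 2)⁻¹ / 2 :=
    (((hN.continuous_slope 1).pow 2).inv₀ fun t => (pow_pos (hp t) 2).ne').div_const _
  have hi : IntegrableOn (fun t => (N 1 t ^ 2)⁻¹ / 2) (Ioi 0) := by
    refine ⟨hc.aestronglyMeasurable, ?_⟩
    rw [hasFiniteIntegral_iff_ofReal (Eventually.of_forall fun t => by have := hp t; positivity),
      ← hN.volume_quadrantPart]
    exact h.lt_top
  constructor
  · refine (hi.const_mul 2).congr (Eventually.of_forall fun t => ?_)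
    simp only; ring
  · rw [hN.volume_quadrantPart, ← integral_eq_lintegral_of_nonneg_ae
      (Eventually.of_forall fun t => by have := hp t; positivity) hc.aestronglyMeasurable,
      ← integral_const_mul]
    congr 1; ext t; ring

/-! ### Stability in one quadrant -/

/-- The substitution `t ↦ 1 / t` exchanges the roles of the two axes. -/
theorem IsPlaneGauge.integral_swap {N : ℝ → ℝ → ℝ} (hN : IsPlaneGauge N)
    (hi : IntegrableOn (fun t => (N 1 t ^ 2)⁻¹) (Ioi 0)) {p : ℝ} (hp : 0 < p) :
    ∫ t in (0:ℝ)..p, (N t 1 ^ 2)⁻¹ =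
      (∫ t in Ioi 0, (N 1 t ^ 2)⁻¹) - ∫ t in (0:ℝ)..p⁻¹, (N 1 t ^ 2)⁻¹ := by
  have h1 : Continuous fun t => (N 1 t ^ 2)⁻¹ :=
    ((hN.continuous_slope 1).pow 2).inv₀ fun t => (pow_pos (hN.pos _ _ (Or.inl one_ne_zero)) 2).ne'
  have h2 : Continuous fun t => (N t 1 ^ 2)⁻¹ :=
    ((hN.swap.continuous_slope 1).pow 2).inv₀
      fun t => (pow_pos (hN.pos _ _ (Or.inr one_ne_zero)) 2).ne'
  set A : ℝ → ℝ := fun p => ∫ t in (0:ℝ)..p, (N t 1 ^ 2)⁻¹ with hA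
  set B : ℝ → ℝ := fun p => ∫ t in (0:ℝ)..p, (N 1 t ^ 2)⁻¹ with hB
  have hA' : ∀ p, HasDerivAt A ((N p 1 ^ 2)⁻¹) p := fun p =>
    intervalIntegral.integral_hasDerivAt_right (h2.intervalIntegrable _ _)
      h2.aestronglyMeasurable.stronglyMeasurableAtFilter h2.continuousAt
  have hB' : ∀ p, HasDerivAt B ((N 1 p ^ 2)⁻¹) p := fun p =>
    intervalIntegral.integral_hasDerivAt_right (h1.intervalIntegrable _ _)
      h1.aestronglyMeasurable.stronglyMeasurableAtFilter h1.continuousAt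
  have hS : ∀ p ∈ Ioi (0:ℝ), HasDerivAt (fun p => A p + B p⁻¹) 0 p := by
    intro p hp
    have hp : 0 < p := hp
    have := (hA' p).add ((hB' p⁻¹).comp p (hasDerivAt_inv hp.ne'))
    refine this.congr_deriv ?_
    have e : N p 1 = p * N 1 p⁻¹ := by
      rw [← hN.homog _ _ _ hp.le, mul_one, mul_inv_cancel₀ hp.ne']
    have : 0 < N 1 p⁻¹ := hN.pos _ _ (Or.inl one_ne_zero)
    rw [e]
    field_simp
    ring
  have hconst : ∀ q ∈ Ioi (0:ℝ), A q + B q⁻¹ = A p + B p⁻¹ := by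
    intro q hq
    refine isOpen_Ioi.is_const_of_deriv_eq_zero (convex_Ioi 0).isPreconnected
      (f := fun p => A p + B p⁻¹)
      (fun x hx => (hS x hx).differentiableAt.differentiableWithinAt) (fun x hx => (hS x hx).deriv)
      hq hp
  have hlim : Tendsto (fun q => A q + B q⁻¹) (𝓝[>] 0) (𝓝 (0 + ∫ t in Ioi 0, (N 1 t ^ 2)⁻¹)) := by
    refine Tendsto.add ?_ ?_
    · have : Tendsto A (𝓝 0) (𝓝 (A 0)) := (hA' 0).continuousAt
      simp only [hA, intervalIntegral.integral_same] at this
      exact this.mono_left nhdsWithin_le_nhds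
    · exact intervalIntegral_tendsto_integral_Ioi 0 hi tendsto_inv_nhdsGT_zero
  have hlim2 : Tendsto (fun q => A q + B q⁻¹) (𝓝[>] 0) (𝓝 (A p + B p⁻¹)) := by
    refine tendsto_const_nhds.congr' ?_
    filter_upwards [self_mem_nhdsWithin] with q hq using (hconst q hq).symm
  have := tendsto_nhds_unique hlim hlim2
  change A p = _ - B p⁻¹
  linarith

/-- Stability in one quadrant: if the body has area `π / 4` there, the polar body has at most that
area, and near-equality makes the body close to an ellipse in the sense of sector areas, with slopes
measured from either axis. -/
theorem quadrant_stability {N M : ℝ → ℝ → ℝ} (hN : IsPlaneGauge N) (hM : IsPlaneGauge M)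
    (hNM : ∀ x y u w, x * u + y * w ≤ N x y * M u w)
    (hA : volume (quadrantPart N) = ENNReal.ofReal (π / 4))
    (hMfin : volume (quadrantPart M) ≠ ⊤) :
    (volume (quadrantPart M)).toReal ≤ π / 4 ∧ ∀ δ, 0 < δ → δ ≤ 1 →
      π / 4 * (1 - 4 * δ) ≤ (volume (quadrantPart M)).toReal →
      ∃ ρ, 0 < ρ ∧ SectorClose (fun t => N 1 t) ρ (18 * √δ) ∧
        SectorClose (fun t => N t 1) (1 / ρ) (18 * √δ) := by
  have hpi := Real.pi_pos
  have hN1 : ∀ t, 0 < N 1 t := fun t => hN.pos _ _ (Or.inl one_ne_zero)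
  obtain ⟨hfi, hα⟩ := hN.integrable_and_integral (by rw [hA]; exact ENNReal.ofReal_ne_top)
  obtain ⟨hki, hβ⟩ := hM.integrable_and_integral hMfin
  rw [hA, ENNReal.toReal_ofReal (by positivity)] at hα
  set B := (volume (quadrantPart M)).toReal with hB
  have hB0 : 0 ≤ B := ENNReal.toReal_nonneg
  obtain ⟨h1, h2⟩ := sector_stability (hN.continuous_slope 1) (hM.continuous_slope 1) hN1
    (fun t => hM.pos _ _ (Or.inl one_ne_zero))
    (fun p s _ _ => by simpa using hNM 1 p 1 s) hfi hki hα hβ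
  set κ := √(2 * B / (2 * (π / 4))) with hκ
  have hκ0 : 0 ≤ κ := Real.sqrt_nonneg _
  have hκ1 : κ ≤ 1 := by
    by_contra hlt
    push Not at hlt
    nlinarith
  have hκ2 : κ ^ 2 = 2 * B / (2 * (π / 4)) := Real.sq_sqrt (by positivity)
  have hBκ : B = π / 4 * κ ^ 2 := by rw [hκ2]; field_simp
  refine ⟨by rw [hBκ]; nlinarith, fun δ hδ hδ1 hle => ?_⟩
  have hκδ : 1 - 4 * δ ≤ κ := by
    have : 1 - 4 * δ ≤ κ ^ 2 := by
      rw [hBκ] at hle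
      exact le_of_mul_le_mul_left hle (by positivity)
    nlinarith
  obtain ⟨ρ, hρ, hc⟩ := h2 (2 * π * δ) (by positivity) (by nlinarith)
  have hF : ∀ p, 0 ≤ p → 0 ≤ (∫ t in (0:ℝ)..p, (N 1 t ^ 2)⁻¹) ∧
      (∫ t in (0:ℝ)..p, (N 1 t ^ 2)⁻¹) ≤ π / 2 := by
    intro p hp
    refine ⟨intervalIntegral.integral_nonneg hp fun t _ => by have := hN1 t; positivity, ?_⟩
    rw [intervalIntegral.integral_of_le hp]
    refine (setIntegral_mono_set hfi (Eventually.of_forall fun t => ?_)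
      (Eventually.of_forall Ioc_subset_Ioi_self)).trans ?_
    · have := hN1 t
      simp only [Pi.zero_apply]; positivity
    · rw [hα]; linarith
  have hη : 2 * (2 * π * δ) + √(π * (2 * π * δ)) ≤ 18 * √δ := by
    have hs : δ ≤ √δ := by
      rw [Real.le_sqrt hδ.le hδ.le]; nlinarith
    have : √(π * (2 * π * δ)) ≤ 5 * √δ := by
      rw [show π * (2 * π * δ) = (2 * π ^ 2) * δ by ring, Real.sqrt_mul (by positivity)]
      gcongr
      rw [Real.sqrt_le_left (by norm_num)]
      nlinarith [Real.pi_lt_d2]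
    nlinarith [Real.pi_lt_d2]
  have key : SectorClose (fun t => N 1 t) ρ (18 * √δ) := by
    intro p hp
    obtain ⟨hF0, hF1⟩ := hF p hp
    have := hc p hp
    refine le_trans ?_ hη
    rw [abs_le] at *
    constructor <;> nlinarith
  refine ⟨ρ, hρ, key, ?_⟩
  intro p hp
  rcases hp.eq_or_lt with rfl | hp
  · simp
  · rw [hN.integral_swap hfi hp, hα]
    have h3 := key p⁻¹ (by positivity)
    have h4 : arctan (1 / ρ * p) = π / 2 - arctan (ρ * p⁻¹) := by
      rw [← arctan_inv_of_pos (by positivity)]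
      congr 1
      field_simp
    rw [h4, abs_le]
    rw [abs_le] at h3
    constructor <;> linarith

/-! ### Combining the four quadrants -/

theorem measurePreserving_reflect {σ τ : ℝ} (hσ : σ = 1 ∨ σ = -1) (hτ : τ = 1 ∨ τ = -1) :
    MeasurePreserving (fun p : ℝ × ℝ => (σ * p.1, τ * p.2)) volume volume := by
  have h : ∀ σ : ℝ, (σ = 1 ∨ σ = -1) → MeasurePreserving (fun x : ℝ => σ * x) volume volume := by
    rintro σ (rfl | rfl)
    · simp only [one_mul]
      exact MeasurePreserving.id volume
    · simpa using Measure.measurePreserving_neg (volume : Measure ℝ)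
  exact (h σ hσ).prod (h τ hτ)

theorem volume_axes : volume {p : ℝ × ℝ | p.1 = 0 ∨ p.2 = 0} = 0 := by
  have h1 : volume {p : ℝ × ℝ | p.1 = 0} = 0 := by
    have : {p : ℝ × ℝ | p.1 = 0} = {0} ×ˢ univ := by ext; simp
    rw [this, Measure.volume_eq_prod, Measure.prod_prod]; simp
  have h2 : volume {p : ℝ × ℝ | p.2 = 0} = 0 := by
    have : {p : ℝ × ℝ | p.2 = 0} = univ ×ˢ {0} := by ext; simp
    rw [this, Measure.volume_eq_prod, Measure.prod_prod]; simp
  exact measure_union_null h1 h2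

/-- The open quadrant of the points whose coordinates have the signs of `σ` and `τ`. -/
def signedQuadrant (σ τ : ℝ) : Set (ℝ × ℝ) := {p | 0 < σ * p.1 ∧ 0 < τ * p.2}

theorem measurableSet_signedQuadrant (σ τ : ℝ) : MeasurableSet (signedQuadrant σ τ) :=
  (measurableSet_lt measurable_const (measurable_fst.const_mul σ)).inter
    (measurableSet_lt measurable_const (measurable_snd.const_mul τ))

theorem volume_inter_signedQuadrant {N : ℝ → ℝ → ℝ} (hN : IsPlaneGauge N) {σ τ : ℝ}
    (hσ : σ = 1 ∨ σ = -1) (hτ : τ = 1 ∨ τ = -1) :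
    volume (quadrantPart fun x y => N (σ * x) (τ * y)) =
      volume ({p : ℝ × ℝ | N p.1 p.2 ≤ 1} ∩ signedQuadrant σ τ) := by
  have hm : MeasurableSet ({p : ℝ × ℝ | N p.1 p.2 ≤ 1} ∩ signedQuadrant σ τ) :=
    (measurableSet_le hN.cont.measurable measurable_const).inter
      (measurableSet_signedQuadrant σ τ)
  rw [← (measurePreserving_reflect hσ hτ).measure_preimage hm.nullMeasurableSet]
  congr 1
  ext p
  have e : ∀ σ : ℝ, (σ = 1 ∨ σ = -1) → ∀ x, σ * (σ * x) = x := by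
    rintro σ (rfl | rfl) x <;> simp
  simp only [quadrantPart, signedQuadrant, mem_ofPred_eq, mem_preimage, mem_inter_iff, e σ hσ,
    e τ hτ]
  tauto

theorem volume_le_four (D : Set (ℝ × ℝ)) :
    volume D ≤ volume (D ∩ signedQuadrant 1 1) + volume (D ∩ signedQuadrant 1 (-1)) +
      volume (D ∩ signedQuadrant (-1) 1) + volume (D ∩ signedQuadrant (-1) (-1)) := by
  have hsub : D ⊆ {p : ℝ × ℝ | p.1 = 0 ∨ p.2 = 0} ∪ ((D ∩ signedQuadrant 1 1) ∪
      (D ∩ signedQuadrant 1 (-1)) ∪ (D ∩ signedQuadrant (-1) 1) ∪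
      (D ∩ signedQuadrant (-1) (-1))) := by
    rintro ⟨x, y⟩ h
    simp only [signedQuadrant, mem_union, mem_inter_iff, mem_ofPred_eq, h, true_and]
    rcases lt_trichotomy x 0 with hx | hx | hx <;> rcases lt_trichotomy y 0 with hy | hy | hy <;>
      simp [hx, hy]
  refine (measure_mono hsub).trans ((measure_union_le _ _).trans ?_)
  rw [volume_axes, zero_add]
  refine (measure_union_le _ _).trans ?_
  gcongr
  refine (measure_union_le _ _).trans ?_
  gcongr
  exact measure_union_le _ _

/-- The Euclidean norm whose unit disc is the ellipse `x² / ρ + ρ y² ≤ 1`. -/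
def ellNorm (ρ x y : ℝ) : ℝ := √(x ^ 2 / ρ + ρ * y ^ 2)

theorem mul_ellNorm_slope {ρ x y : ℝ} (hx : 0 < x) :
    x * √(1 / ρ + ρ * (y / x) ^ 2) = ellNorm ρ x y := by
  rw [ellNorm, ← Real.sqrt_sq hx.le, ← Real.sqrt_mul (sq_nonneg _), Real.sqrt_sq hx.le]
  congr 1
  rw [div_pow, mul_add]
  congr 1
  · ring
  · rw [mul_left_comm, mul_div_cancel₀ _ (pow_pos hx 2).ne']

theorem mul_ellNorm_slope' {ρ x y : ℝ} (hy : 0 < y) :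
    y * √(1 / (1 / ρ) + (1 / ρ) * (x / y) ^ 2) = ellNorm ρ x y := by
  rw [mul_ellNorm_slope hy, ellNorm, ellNorm]
  congr 1
  rw [one_div, div_inv_eq_mul, add_comm]
  ring

theorem ellNorm_le {ρ ρ' q x y : ℝ} (hρ : 0 < ρ) (hρ' : 0 < ρ') (hq : 0 < q)
    (h1 : q ^ 4 * ρ ≤ ρ') (h2 : q ^ 4 * ρ' ≤ ρ) :
    q ^ 2 * ellNorm ρ x y ≤ ellNorm ρ' x y := by
  rw [ellNorm, ellNorm, ← Real.sqrt_sq (pow_pos hq 2).le, ← Real.sqrt_mul (sq_nonneg _)]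
  apply Real.sqrt_le_sqrt
  rw [mul_add, ← pow_mul, show 2 * 2 = 4 from rfl]
  apply add_le_add
  · rw [mul_div_assoc', div_le_div_iff₀ hρ hρ']
    linarith [mul_le_mul_of_nonneg_left h2 (sq_nonneg x)]
  · linarith [mul_le_mul_of_nonneg_left h1 (sq_nonneg y)]

/-- Bounds for the slopes at most `1 / ρ` and for the reciprocal slopes at most `ρ` combine to bounds
on the whole quadrant, since `N` is homogeneous. -/
theorem quadrant_bounds {N : ℝ → ℝ → ℝ} (hN : IsPlaneGauge N) {ρ σ τ a b : ℝ} (hρ : 0 < ρ)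
    (h1 : ∀ t, 0 ≤ t → t * ρ ≤ 1 →
      a * √(1 / ρ + ρ * t ^ 2) ≤ N σ (τ * t) ∧ N σ (τ * t) ≤ b * √(1 / ρ + ρ * t ^ 2))
    (h2 : ∀ t, 0 ≤ t → t * (1 / ρ) ≤ 1 →
      a * √(1 / (1 / ρ) + (1 / ρ) * t ^ 2) ≤ N (σ * t) τ ∧
        N (σ * t) τ ≤ b * √(1 / (1 / ρ) + (1 / ρ) * t ^ 2))
    {x y : ℝ} (hx : 0 ≤ x) (hy : 0 ≤ y) :
    a * ellNorm ρ x y ≤ N (σ * x) (τ * y) ∧ N (σ * x) (τ * y) ≤ b * ellNorm ρ x y := by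
  rcases le_or_gt (ρ * y) x with h | h
  · rcases hx.eq_or_lt with rfl | hx
    · have hy0 : y = 0 := by
        by_contra hne
        have : 0 < y := lt_of_le_of_ne hy (Ne.symm hne)
        have : 0 < ρ * y := by positivity
        linarith
      subst hy0
      have := hN.homog 0 0 0 le_rfl
      simp only [zero_mul] at this
      simp [ellNorm, this]
    · have := h1 (y / x) (by positivity) (by rw [div_mul_eq_mul_div, div_le_one hx]; linarith)
      have e : N (σ * x) (τ * y) = x * N σ (τ * (y / x)) := by
        rw [← hN.homog _ _ _ hx.le]; congr 1 <;> field_simp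
      rw [e, ← mul_ellNorm_slope hx]
      constructor <;> nlinarith [this.1, this.2]
  · have hy : 0 < y := by
      rcases hy.eq_or_lt with rfl | hy
      · simp at h; linarith
      · exact hy
    have := h2 (x / y) (by positivity) (by
      rw [div_mul_div_comm, mul_one, div_le_one (by positivity)]; linarith)
    have e : N (σ * x) (τ * y) = y * N (σ * (x / y)) τ := by
      rw [← hN.homog _ _ _ hy.le]; congr 1 <;> field_simp
    rw [e, ← mul_ellNorm_slope' hy]
    constructor <;> nlinarith [this.1, this.2]

/-- If the body of `N` has area `π / 4` in each quadrant and the area of the body of `M` is close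
to `π`, then `N` is close to a single elliptic norm: `quadrant_stability` applies in each quadrant,
and convexity across the axes forces the four parameters to agree. -/
theorem four_quadrants {N M : ℝ → ℝ → ℝ} (hN : IsPlaneGauge N) (hM : IsPlaneGauge M)
    (hNM : ∀ x y u w, x * u + y * w ≤ N x y * M u w)
    (hA : ∀ σ τ : ℝ, (σ = 1 ∨ σ = -1) → (τ = 1 ∨ τ = -1) →
      volume ({p : ℝ × ℝ | N p.1 p.2 ≤ 1} ∩ signedQuadrant σ τ) = ENNReal.ofReal (π / 4))
    (hMfin : volume {p : ℝ × ℝ | M p.1 p.2 ≤ 1} ≠ ⊤) {δ Δ : ℝ} (hδ : 0 < δ) (hδ1 : δ ≤ 1)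
    (hMvol : π * (1 - δ) ≤ (volume {p : ℝ × ℝ | M p.1 p.2 ≤ 1}).toReal)
    (hΔ : 0 < Δ) (hΔ1 : Δ ≤ 1 / 100) (hη : 18 * √δ < Δ ^ 2 / 40) :
    ∃ ρ, 0 < ρ ∧ ∀ x y,
      (1 - 8 * Δ) * (1 - 14 * Δ) ^ 2 * ellNorm ρ x y ≤ N x y ∧
        (1 - 14 * Δ) ^ 2 * N x y ≤ (1 + 6 * Δ) * ellNorm ρ x y := by
  have ne : ∀ σ : ℝ, (σ = 1 ∨ σ = -1) → σ ≠ 0 := by rintro σ (rfl | rfl) <;> norm_num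
  have sq : ∀ σ : ℝ, (σ = 1 ∨ σ = -1) → σ * σ = 1 := by rintro σ (rfl | rfl) <;> norm_num
  have hngs : ∀ σ : ℝ, (σ = 1 ∨ σ = -1) → (-σ = 1 ∨ -σ = -1) := by
    rintro σ (rfl | rfl) <;> norm_num
  set D := {p : ℝ × ℝ | M p.1 p.2 ≤ 1} with hD
  have hfin : ∀ σ τ, volume (D ∩ signedQuadrant σ τ) ≠ ⊤ := fun σ τ =>
    ne_top_of_le_ne_top hMfin (measure_mono inter_subset_left)
  -- the stability estimate in a single quadrant
  have hq : ∀ σ τ : ℝ, (σ = 1 ∨ σ = -1) → (τ = 1 ∨ τ = -1) →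
      (volume (D ∩ signedQuadrant σ τ)).toReal ≤ π / 4 ∧
      (π / 4 * (1 - 4 * δ) ≤ (volume (D ∩ signedQuadrant σ τ)).toReal →
        ∃ ρ, 0 < ρ ∧ SectorClose (fun t => N σ (τ * t)) ρ (18 * √δ) ∧
          SectorClose (fun t => N (σ * t) τ) (1 / ρ) (18 * √δ)) := by
    intro σ τ hσ hτ
    have h := quadrant_stability (hN.reflect (ne σ hσ) (ne τ hτ)) (hM.reflect (ne σ hσ) (ne τ hτ))
      (fun x y u w => by
        have := hNM (σ * x) (τ * y) (σ * u) (τ * w)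
        rwa [mul_mul_mul_comm, mul_mul_mul_comm τ, sq σ hσ, sq τ hτ, one_mul, one_mul] at this)
      (by rw [volume_inter_signedQuadrant hN hσ hτ]; exact hA σ τ hσ hτ)
      (by rw [volume_inter_signedQuadrant hM hσ hτ]; exact hfin σ τ)
    rw [volume_inter_signedQuadrant hM hσ hτ] at h
    refine ⟨h.1, fun hle => ?_⟩
    simpa using h.2 δ hδ hδ1 hle
  have hsum : (volume D).toReal ≤ (volume (D ∩ signedQuadrant 1 1)).toReal +
      (volume (D ∩ signedQuadrant 1 (-1))).toReal + (volume (D ∩ signedQuadrant (-1) 1)).toReal +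
      (volume (D ∩ signedQuadrant (-1) (-1))).toReal := by
    rw [← ENNReal.toReal_add (hfin _ _) (hfin _ _), ← ENNReal.toReal_add _ (hfin _ _),
      ← ENNReal.toReal_add _ (hfin _ _)]
    · refine ENNReal.toReal_mono ?_ (volume_le_four D)
      simp [hfin]
    · simp [hfin]
    · simp [hfin]
  have p1 : (1:ℝ) = 1 ∨ (1:ℝ) = -1 := Or.inl rfl
  have m1 : (-1:ℝ) = 1 ∨ (-1:ℝ) = -1 := Or.inr rfl
  -- no quadrant of `D` exceeds `π / 4`, so each is at least `π / 4 - π * δ`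
  have hq' : ∀ σ τ : ℝ, (σ = 1 ∨ σ = -1) → (τ = 1 ∨ τ = -1) →
      ∃ ρ, 0 < ρ ∧ SectorClose (fun t => N σ (τ * t)) ρ (18 * √δ) ∧
          SectorClose (fun t => N (σ * t) τ) (1 / ρ) (18 * √δ) := by
    intro σ τ hσ hτ
    refine (hq σ τ hσ hτ).2 ?_
    have a1 := (hq 1 1 p1 p1).1
    have a2 := (hq 1 (-1) p1 m1).1
    have a3 := (hq (-1) 1 m1 p1).1
    have a4 := (hq (-1) (-1) m1 m1).1
    rcases hσ with rfl | rfl <;> rcases hτ with rfl | rfl <;> linarith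
  choose! r hr hr1 hr2 using hq'
  have hq0 : 0 < 1 - 14 * Δ := by linarith
  -- adjacent quadrants across a horizontal axis
  have hvert : ∀ σ τ : ℝ, (σ = 1 ∨ σ = -1) → (τ = 1 ∨ τ = -1) →
      √(r σ τ) * (1 - 14 * Δ) ≤ √(r σ (-τ)) ∧ ∀ t, 0 ≤ t → t * r σ τ ≤ 1 →
        (1 - 8 * Δ) * √(1 / r σ τ + r σ τ * t ^ 2) ≤ N σ (τ * t) ∧
          N σ (τ * t) ≤ (1 + 6 * Δ) * √(1 / r σ τ + r σ τ * t ^ 2) := by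
    intro σ τ hσ hτ
    have hg := hN.reflect (ne σ hσ) (ne τ hτ)
    have hc := hg.continuous_slope 1
    have hcv := hg.convexOn_slope 1
    have hp : ∀ t, 0 < N (σ * 1) (τ * t) := fun t => hg.pos 1 t (Or.inl one_ne_zero)
    simp only [mul_one] at hc hcv hp
    have h := SectorClose.half_plane hc hp hcv hΔ hΔ1 hη (hr σ τ hσ hτ)
      (hr σ (-τ) hσ (hngs τ hτ)) (hr1 σ τ hσ hτ)
      (by simpa only [neg_mul, mul_neg] using hr1 σ (-τ) hσ (hngs τ hτ))
    exact ⟨h.1, h.2.2⟩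
  have hhor : ∀ σ τ : ℝ, (σ = 1 ∨ σ = -1) → (τ = 1 ∨ τ = -1) →
      √(1 / r σ τ) * (1 - 14 * Δ) ≤ √(1 / r (-σ) τ) ∧ ∀ t, 0 ≤ t → t * (1 / r σ τ) ≤ 1 →
        (1 - 8 * Δ) * √(1 / (1 / r σ τ) + (1 / r σ τ) * t ^ 2) ≤ N (σ * t) τ ∧
          N (σ * t) τ ≤ (1 + 6 * Δ) * √(1 / (1 / r σ τ) + (1 / r σ τ) * t ^ 2) := by
    intro σ τ hσ hτ
    have hg := (hN.reflect (ne σ hσ) (ne τ hτ)).swap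
    have hc := hg.continuous_slope 1
    have hcv := hg.convexOn_slope 1
    have hp : ∀ t, 0 < N (σ * t) (τ * 1) := fun t => hg.pos 1 t (Or.inl one_ne_zero)
    simp only [mul_one] at hc hcv hp
    have h := SectorClose.half_plane hc hp hcv hΔ hΔ1 hη (one_div_pos.2 (hr σ τ hσ hτ))
      (one_div_pos.2 (hr (-σ) τ (hngs σ hσ) hτ)) (hr2 σ τ hσ hτ)
      (by simpa only [neg_mul, mul_neg] using hr2 (-σ) τ (hngs σ hσ) hτ)
    exact ⟨h.1, h.2.2⟩
  set q := 1 - 14 * Δ with hqdef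
  have hq1 : q ≤ 1 := by linarith
  have hv : ∀ σ τ : ℝ, (σ = 1 ∨ σ = -1) → (τ = 1 ∨ τ = -1) → q ^ 2 * r σ τ ≤ r σ (-τ) := by
    intro σ τ hσ hτ
    have h := (hvert σ τ hσ hτ).1
    have h' := pow_le_pow_left₀ (by positivity) h 2
    rw [mul_pow, Real.sq_sqrt (hr σ τ hσ hτ).le, Real.sq_sqrt (hr _ _ hσ (hngs τ hτ)).le] at h'
    linarith
  have hh : ∀ σ τ : ℝ, (σ = 1 ∨ σ = -1) → (τ = 1 ∨ τ = -1) → q ^ 2 * r (-σ) τ ≤ r σ τ := by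
    intro σ τ hσ hτ
    have h := (hhor σ τ hσ hτ).1
    have hsq := pow_le_pow_left₀ (by positivity) h 2
    have e1 := hr σ τ hσ hτ
    have e2 := hr _ _ (hngs σ hσ) hτ
    rw [mul_pow, Real.sq_sqrt (one_div_pos.2 e1).le, Real.sq_sqrt (one_div_pos.2 e2).le,
      div_mul_eq_mul_div, one_mul, div_le_div_iff₀ e1 e2, one_mul] at hsq
    exact hsq
  -- all four parameters agree up to a factor `q ^ 4`
  have hcmp : ∀ σ τ : ℝ, (σ = 1 ∨ σ = -1) → (τ = 1 ∨ τ = -1) →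
      q ^ 4 * r 1 1 ≤ r σ τ ∧ q ^ 4 * r σ τ ≤ r 1 1 := by
    have v1 := hv 1 1 p1 p1
    have v2 := hv 1 (-1) p1 m1
    have h1 := hh 1 1 p1 p1
    have h2 := hh (-1) 1 m1 p1
    have h3 := hh 1 (-1) p1 m1
    have h4 := hh (-1) (-1) m1 m1
    rw [neg_neg] at v2 h2 h4
    have r1 := hr 1 1 p1 p1
    have r2 := hr 1 (-1) p1 m1
    have r3 := hr (-1) 1 m1 p1
    have r4 := hr (-1) (-1) m1 m1
    have hqq : q ^ 2 ≤ 1 := pow_le_one₀ hq0.le hq1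
    have hqp : 0 < q ^ 2 := by positivity
    have hs : ∀ u : ℝ, q ^ 4 * u = q ^ 2 * (q ^ 2 * u) := fun u => by ring
    have hle : ∀ u : ℝ, 0 < u → q ^ 2 * u ≤ u := fun u hu => by nlinarith
    have hmono : ∀ u v : ℝ, u ≤ v → q ^ 2 * u ≤ q ^ 2 * v := fun u v h => by nlinarith
    intro σ τ hσ hτ
    rw [hs, hs]
    rcases hσ with rfl | rfl <;> rcases hτ with rfl | rfl
    · have := hle _ r1
      have := hmono _ _ this
      constructor <;> linarith
    · have := hle _ r1
      have := hle _ r2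
      have := hmono _ _ (hle _ r1)
      have := hmono _ _ (hle _ r2)
      constructor <;> linarith
    · have := hmono _ _ (hle _ r1)
      have := hmono _ _ (hle _ r3)
      constructor <;> linarith
    · have := hmono _ _ v1
      have := hmono _ _ h3
      constructor <;> linarith
  refine ⟨r 1 1, hr 1 1 p1 p1, fun x y => ?_⟩
  obtain ⟨σ, hσ, hx⟩ : ∃ σ : ℝ, (σ = 1 ∨ σ = -1) ∧ 0 ≤ σ * x := by
    rcases le_total 0 x with h | h
    · exact ⟨1, Or.inl rfl, by linarith⟩
    · exact ⟨-1, Or.inr rfl, by linarith⟩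
  obtain ⟨τ, hτ, hy⟩ : ∃ τ : ℝ, (τ = 1 ∨ τ = -1) ∧ 0 ≤ τ * y := by
    rcases le_total 0 y with h | h
    · exact ⟨1, Or.inl rfl, by linarith⟩
    · exact ⟨-1, Or.inr rfl, by linarith⟩
  have hb := quadrant_bounds hN (hr σ τ hσ hτ) (hvert σ τ hσ hτ).2 (hhor σ τ hσ hτ).2 hx hy
  rw [← mul_assoc, ← mul_assoc, sq σ hσ, sq τ hτ, one_mul, one_mul] at hb
  have he : ∀ ρ, ellNorm ρ (σ * x) (τ * y) = ellNorm ρ x y := fun ρ => by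
    simp only [ellNorm, mul_pow, pow_two σ, pow_two τ, sq σ hσ, sq τ hτ, one_mul]
  rw [he] at hb
  obtain ⟨c1, c2⟩ := hcmp σ τ hσ hτ
  have l1 := ellNorm_le (x := x) (y := y) (hr 1 1 p1 p1) (hr σ τ hσ hτ) hq0 c1 c2
  have l2 := ellNorm_le (x := x) (y := y) (hr σ τ hσ hτ) (hr 1 1 p1 p1) hq0 c2 c1
  have k1 : 0 < 1 - 8 * Δ := by linarith
  constructor
  · rw [mul_assoc]
    exact (mul_le_mul_of_nonneg_left l1 k1.le).trans hb.1
  · calc q ^ 2 * N x y ≤ q ^ 2 * ((1 + 6 * Δ) * ellNorm (r σ τ) x y) := by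
          gcongr; exact hb.2
      _ = (1 + 6 * Δ) * (q ^ 2 * ellNorm (r σ τ) x y) := by ring
      _ ≤ _ := by gcongr

/-! ### Bodies quartered by the axes -/

/-- The polar of a subset of the coordinate plane. -/
def planePolar (C : Set (ℝ × ℝ)) : Set (ℝ × ℝ) := {q | ∀ p ∈ C, p.1 * q.1 + p.2 * q.2 ≤ 1}

theorem isPlaneGauge_gauge {C : Set (ℝ × ℝ)} (hC : IsCompact C) (hcv : Convex ℝ C)
    (h0 : C ∈ 𝓝 (0 : ℝ × ℝ)) : IsPlaneGauge fun x y => gauge C (x, y) where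
  cont := continuous_gauge hcv h0
  pos x y h := (gauge_pos (absorbent_nhds_zero h0)
    (NormedSpace.isVonNBounded_of_isBounded ℝ hC.isBounded)).2 (by
      rintro ⟨⟩; simp at h)
  homog r x y hr := by
    have := gauge_smul_of_nonneg (s := C) hr (x, y)
    simpa using this
  add_le x y x' y' := by
    simpa using gauge_add_le hcv (absorbent_nhds_zero h0) (x, y) (x', y')

theorem gauge_le_one_iff {C : Set (ℝ × ℝ)} (hC : IsCompact C) (hcv : Convex ℝ C)
    (h0 : C ∈ 𝓝 (0 : ℝ × ℝ)) (p : ℝ × ℝ) : gauge C p ≤ 1 ↔ p ∈ C := by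
  rw [gauge_le_one_iff_mem_closure hcv h0, hC.isClosed.closure_eq]

theorem convex_planePolar (C : Set (ℝ × ℝ)) : Convex ℝ (planePolar C) := by
  intro u hu v hv a b ha hb hab p hp
  have h1 := hu p hp
  have h2 := hv p hp
  simp only [Prod.fst_add, Prod.smul_fst, Prod.snd_add, Prod.smul_snd, smul_eq_mul]
  nlinarith

theorem isCompact_planePolar {C : Set (ℝ × ℝ)} (h0 : C ∈ 𝓝 (0 : ℝ × ℝ)) :
    IsCompact (planePolar C) := by
  refine Metric.isCompact_of_isClosed_isBounded ?_ ?_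
  · have : planePolar C = ⋂ p ∈ C, {q : ℝ × ℝ | p.1 * q.1 + p.2 * q.2 ≤ 1} := by
      ext q; simp [planePolar]
    rw [this]
    exact isClosed_biInter fun p _ => isClosed_le (by fun_prop) continuous_const
  · obtain ⟨r, hr, hb⟩ := Metric.nhds_basis_closedBall.mem_iff.1 h0
    refine (Metric.isBounded_closedBall (x := (0 : ℝ × ℝ)) (r := 1 / r)).subset ?_
    intro q hq
    have hmem : ∀ x y : ℝ, |x| ≤ r → |y| ≤ r → x * q.1 + y * q.2 ≤ 1 := fun x y hx hy =>
      hq (x, y) (hb (by simp [Prod.norm_def, hx, hy]))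
    have hr' : |r| ≤ r := (abs_of_pos hr).le
    have hr'' : |-r| ≤ r := by rw [abs_neg]; exact hr'
    have h0' : |(0 : ℝ)| ≤ r := by simpa using hr.le
    have a1 := hmem r 0 hr' h0'
    have a2 := hmem (-r) 0 hr'' h0'
    have a3 := hmem 0 r h0' hr'
    have a4 := hmem 0 (-r) h0' hr''
    rw [mem_closedBall_zero_iff, Prod.norm_def, sup_le_iff, Real.norm_eq_abs, Real.norm_eq_abs,
      abs_le, abs_le, ← neg_div, div_le_iff₀ hr, le_div_iff₀ hr, div_le_iff₀ hr, le_div_iff₀ hr]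
    refine ⟨⟨?_, ?_⟩, ?_, ?_⟩ <;> linarith

theorem planePolar_mem_nhds {C : Set (ℝ × ℝ)} (hC : IsCompact C) :
    planePolar C ∈ 𝓝 (0 : ℝ × ℝ) := by
  obtain ⟨R, hR, hb⟩ := hC.isBounded.exists_pos_norm_le
  refine Filter.mem_of_superset (Metric.closedBall_mem_nhds 0 (ε := 1 / (2 * R)) (by positivity)) ?_
  intro q hq p hp
  have h1 := hb p hp
  simp only [mem_closedBall_zero_iff, Prod.norm_def, Real.norm_eq_abs, sup_le_iff] at hq h1
  have e : R * (1 / (2 * R)) = 1 / 2 := by field_simp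
  have b1 : p.1 * q.1 ≤ 1 / 2 := by
    rw [← e]
    refine (le_abs_self _).trans ?_
    rw [abs_mul]
    exact mul_le_mul h1.1 hq.1 (abs_nonneg _) hR.le
  have b2 : p.2 * q.2 ≤ 1 / 2 := by
    rw [← e]
    refine (le_abs_self _).trans ?_
    rw [abs_mul]
    exact mul_le_mul h1.2 hq.2 (abs_nonneg _) hR.le
  linarith

theorem le_gauge_mul_gauge_planePolar {C : Set (ℝ × ℝ)} (hC : IsCompact C) (hcv : Convex ℝ C)
    (h0 : C ∈ 𝓝 (0 : ℝ × ℝ)) (x y u w : ℝ) :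
    x * u + y * w ≤ gauge C (x, y) * gauge (planePolar C) (u, w) := by
  have hN := isPlaneGauge_gauge hC hcv h0
  have hM := isPlaneGauge_gauge (isCompact_planePolar h0) (convex_planePolar C)
    (planePolar_mem_nhds hC)
  by_cases hxy : x = 0 ∧ y = 0
  · rw [hxy.1, hxy.2]
    simpa using mul_nonneg (gauge_nonneg (0, 0)) (gauge_nonneg (s := planePolar C) (u, w))
  by_cases huw : u = 0 ∧ w = 0
  · rw [huw.1, huw.2]
    simpa using mul_nonneg (gauge_nonneg (x, y)) (gauge_nonneg (s := planePolar C) (0, 0))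
  have n1 : 0 < gauge C (x, y) := hN.pos x y (by tauto)
  have n2 : 0 < gauge (planePolar C) (u, w) := hM.pos u w (by tauto)
  set n := gauge C (x, y)
  set m := gauge (planePolar C) (u, w)
  have c1 : (n⁻¹ * x, n⁻¹ * y) ∈ C := by
    rw [← gauge_le_one_iff hC hcv h0, hN.homog _ _ _ (by positivity)]
    exact (inv_mul_cancel₀ n1.ne').le
  have c2 : (m⁻¹ * u, m⁻¹ * w) ∈ planePolar C := by
    rw [← gauge_le_one_iff (isCompact_planePolar h0) (convex_planePolar C)
      (planePolar_mem_nhds hC), hM.homog _ _ _ (by positivity)]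
    exact (inv_mul_cancel₀ n2.ne').le
  have := c2 _ c1
  have e : n⁻¹ * x * (m⁻¹ * u) + n⁻¹ * y * (m⁻¹ * w) = (x * u + y * w) / (n * m) := by
    field_simp
  simp only at this
  rwa [e, div_le_one (by positivity)] at this

/-- `four_quadrants` for the gauges of a body quartered by the coordinate axes and of its polar. -/
theorem quartered_body_stability {C : Set (ℝ × ℝ)} (hC : IsCompact C) (hcv : Convex ℝ C)
    (h0 : C ∈ 𝓝 (0 : ℝ × ℝ))
    (hA : ∀ σ τ : ℝ, (σ = 1 ∨ σ = -1) → (τ = 1 ∨ τ = -1) →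
      volume (C ∩ signedQuadrant σ τ) = ENNReal.ofReal (π / 4))
    {δ Δ : ℝ} (hδ : 0 < δ) (hδ1 : δ ≤ 1)
    (hvol : π * (1 - δ) ≤ (volume (planePolar C)).toReal)
    (hΔ : 0 < Δ) (hΔ1 : Δ ≤ 1 / 100) (hη : 18 * √δ < Δ ^ 2 / 40) :
    ∃ ρ, 0 < ρ ∧ ∀ p : ℝ × ℝ,
      ((1 + 6 * Δ) * ellNorm ρ p.1 p.2 ≤ (1 - 14 * Δ) ^ 2 → p ∈ C) ∧
        (p ∈ C → (1 - 8 * Δ) * (1 - 14 * Δ) ^ 2 * ellNorm ρ p.1 p.2 ≤ 1) := by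
  have e1 : {p : ℝ × ℝ | gauge C (p.1, p.2) ≤ 1} = C := by
    ext p; exact gauge_le_one_iff hC hcv h0 p
  have e2 : {p : ℝ × ℝ | gauge (planePolar C) (p.1, p.2) ≤ 1} = planePolar C := by
    ext p
    exact gauge_le_one_iff (isCompact_planePolar h0) (convex_planePolar C)
      (planePolar_mem_nhds hC) p
  obtain ⟨ρ, hρ, h⟩ := four_quadrants (isPlaneGauge_gauge hC hcv h0)
    (isPlaneGauge_gauge (isCompact_planePolar h0) (convex_planePolar C) (planePolar_mem_nhds hC))
    (le_gauge_mul_gauge_planePolar hC hcv h0) (by rwa [e1])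
    (by rw [e2]; exact (isCompact_planePolar h0).measure_lt_top.ne) hδ hδ1
    (by rwa [e2]) hΔ hΔ1 hη
  refine ⟨ρ, hρ, fun p => ⟨fun hp => ?_, fun hp => ?_⟩⟩
  · rw [← gauge_le_one_iff hC hcv h0]
    have := (h p.1 p.2).2.trans hp
    have hq : 0 < (1 - 14 * Δ) ^ 2 := pow_pos (by linarith) 2
    exact le_of_mul_le_mul_left (by simpa using this) hq
  · exact (h p.1 p.2).1.trans ((gauge_le_one_iff hC hcv h0 p).2 hp)

/-! ### Halving lines of convex sets -/

/-- The area of the part of `A` where `h ≤ b`. -/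
def areaBelow (A : Set (ℝ × ℝ)) (h : ℝ × ℝ → ℝ) (b : ℝ) : ℝ := volume.real (A ∩ {p | h p ≤ b})

theorem continuous_areaBelow {X : Type*} [TopologicalSpace X] [FirstCountableTopology X]
    {A : Set (ℝ × ℝ)} (hA : volume A ≠ ⊤) {h : X → ℝ × ℝ → ℝ} {b : X → ℝ}
    (hm : ∀ x, Measurable (h x)) (hc : ∀ p, Continuous fun x => h x p) (hb : Continuous b)
    (hnull : ∀ x, volume {p | h x p = b x} = 0) :
    Continuous fun x => areaBelow A (h x) (b x) := by
  have : IsFiniteMeasure (volume.restrict A) := ⟨by simpa using hA.lt_top⟩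
  have hms : ∀ x, MeasurableSet {p | h x p ≤ b x} := fun x =>
    measurableSet_le (hm x) measurable_const
  have e : ∀ x, areaBelow A (h x) (b x) =
      ∫ p, ({p | h x p ≤ b x}).indicator (1 : ℝ × ℝ → ℝ) p ∂(volume.restrict A) := by
    intro x
    rw [integral_indicator_one (hms x), areaBelow, inter_comm, measureReal_restrict_apply (hms x)]
  simp_rw [e]
  rw [continuous_iff_continuousAt]
  intro x₀
  refine continuousAt_of_dominated (bound := fun _ => 1)
    (Eventually.of_forall fun x => (measurable_one.indicator (hms x)).aestronglyMeasurable)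
    (Eventually.of_forall fun x => Eventually.of_forall fun p => ?_) (integrable_const _) ?_
  · refine (norm_indicator_le_norm_self _ _).trans (by simp)
  · have : ∀ᵐ p ∂(volume.restrict A), h x₀ p ≠ b x₀ :=
      ae_restrict_of_ae (by
        have := hnull x₀
        rwa [measure_eq_zero_iff_ae_notMem] at this)
    filter_upwards [this] with p hp
    rcases lt_or_gt_of_ne hp with hlt | hgt
    · refine (continuousAt_const (y := (1:ℝ))).congr ?_
      filter_upwards [(hc p).continuousAt.eventually_lt hb.continuousAt hlt] with x hx
      simp [indicator, hx.le]
    · refine (continuousAt_const (y := (0:ℝ))).congr ?_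
      filter_upwards [hb.continuousAt.eventually_lt (hc p).continuousAt hgt] with x hx
      simp [indicator, hx]

theorem volume_graph (a m b : ℝ) : volume {p : ℝ × ℝ | p.2 - m * (p.1 - a) = b} = 0 := by
  have hms : MeasurableSet {p : ℝ × ℝ | p.2 - m * (p.1 - a) = b} :=
    measurableSet_eq_fun (by fun_prop) measurable_const
  rw [Measure.volume_eq_prod, Measure.measure_prod_null hms]
  refine Eventually.of_forall fun x => ?_
  have : Prod.mk x ⁻¹' {p : ℝ × ℝ | p.2 - m * (p.1 - a) = b} = {b + m * (x - a)} := by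
    ext y
    simp only [mem_preimage, mem_ofPred_eq, mem_singleton_iff]
    constructor <;> intro h <;> linarith
  simp [this]

theorem volume_vertical (a : ℝ) : volume {p : ℝ × ℝ | p.1 = a} = 0 := by
  have : {p : ℝ × ℝ | p.1 = a} = {a} ×ˢ univ := by ext; simp
  rw [this, Measure.volume_eq_prod, Measure.prod_prod]; simp

theorem areaBelow_mono {A : Set (ℝ × ℝ)} (hA : volume A ≠ ⊤) (h : ℝ × ℝ → ℝ) :
    Monotone (areaBelow A h) := fun _ _ hbb' =>
  measureReal_mono (inter_subset_inter_right _ fun _ hp => le_trans hp hbb')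
    (ne_top_of_le_ne_top hA (measure_mono inter_subset_left))

/-- A convex set has positive area between two level lines of `h` if it has positive area on the
outer side of each of them. -/
theorem areaBelow_lt {A : Set (ℝ × ℝ)} (hA : volume A ≠ ⊤) (hcv : Convex ℝ A)
    {h : ℝ × ℝ → ℝ} (hc : Continuous h) {b b' : ℝ} (hb : b < b') (h0 : 0 < areaBelow A h b)
    (h1 : areaBelow A h b' < volume.real A) : areaBelow A h b < areaBelow A h b' := by
  have hsint : ∀ S : Set (ℝ × ℝ), 0 < volume.real (A ∩ S) → (interior A ∩ S).Nonempty := by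
    intro S hS
    by_contra hne
    rw [not_nonempty_iff_eq_empty] at hne
    have hsub : A ∩ S ⊆ frontier A := by
      rintro p ⟨hpA, hpS⟩
      refine ⟨subset_closure hpA, fun hpi => ?_⟩
      exact (hne ▸ (⟨hpi, hpS⟩ : p ∈ interior A ∩ S) : p ∈ (∅ : Set (ℝ × ℝ)))
    have : volume (A ∩ S) = 0 := measure_mono_null hsub (hcv.addHaar_frontier volume)
    simp [Measure.real, this] at hS
  obtain ⟨p, hp, hpb⟩ := hsint _ h0
  obtain ⟨q, hq, hqb⟩ : (interior A ∩ {p | h p ≤ b'}ᶜ).Nonempty := by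
    refine hsint _ ?_
    have := measureReal_inter_add_sdiff (μ := volume) (s := A)
      (measurableSet_le hc.measurable measurable_const : MeasurableSet {p | h p ≤ b'}) hA
    rw [sdiff_eq] at this
    simp only [areaBelow] at h1
    linarith
  simp only [mem_compl_iff, mem_ofPred_eq, not_le] at hpb hqb
  obtain ⟨w, hw, hwb⟩ := hcv.interior.isPreconnected.intermediate_value hp hq hc.continuousOn
    (⟨by linarith, by linarith⟩ : (b + b') / 2 ∈ Icc (h p) (h q))
  have hopen : IsOpen (interior A ∩ {p | b < h p ∧ h p < b'}) :=
    isOpen_interior.inter ((isOpen_lt continuous_const hc).inter (isOpen_lt hc continuous_const))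
  have hpos : 0 < volume (interior A ∩ {p | b < h p ∧ h p < b'}) :=
    hopen.measure_pos volume ⟨w, hw, by constructor <;> linarith⟩
  have hfin : ∀ S, volume (A ∩ S) ≠ ⊤ := fun S =>
    ne_top_of_le_ne_top hA (measure_mono inter_subset_left)
  have hms : MeasurableSet {p | h p ≤ b} := measurableSet_le hc.measurable measurable_const
  have hsplit := measureReal_inter_add_sdiff (μ := volume) (s := A ∩ {p | h p ≤ b'}) hms (hfin _)
  have e1 : A ∩ {p | h p ≤ b'} ∩ {p | h p ≤ b} = A ∩ {p | h p ≤ b} := by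
    ext p
    simp only [mem_inter_iff, mem_ofPred_eq]
    constructor
    · tauto
    · rintro ⟨u, v⟩; exact ⟨⟨u, v.trans hb.le⟩, v⟩
  have hle : volume.real (interior A ∩ {p | b < h p ∧ h p < b'}) ≤
      volume.real ((A ∩ {p | h p ≤ b'}) \ {p | h p ≤ b}) := by
    refine measureReal_mono ?_ (ne_top_of_le_ne_top (hfin _) (measure_mono sdiff_subset))
    rintro p ⟨hpA, hpb, hpb'⟩
    exact ⟨⟨interior_subset hpA, hpb'.le⟩, by simpa using hpb⟩
  have hpos' : 0 < volume.real (interior A ∩ {p | b < h p ∧ h p < b'}) :=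
    ENNReal.toReal_pos hpos.ne' (ne_top_of_le_ne_top hA
      (measure_mono (inter_subset_left.trans interior_subset)))
  rw [e1] at hsplit
  simp only [areaBelow]
  linarith

theorem exists_areaBelow_eq {A : Set (ℝ × ℝ)} (hA : volume A ≠ ⊤) {h : ℝ × ℝ → ℝ}
    (hm : Measurable h) (hnull : ∀ b, volume {p | h p = b} = 0) {R : ℝ}
    (hR : ∀ p ∈ A, |h p| ≤ R) : ∃ b, areaBelow A h b = volume.real A / 2 := by
  have hcont : Continuous (areaBelow A h) :=
    continuous_areaBelow (X := ℝ) (h := fun _ => h) (b := id) hA (fun _ => hm)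
      (fun _ => continuous_const) continuous_id hnull
  have hlo : areaBelow A h (-R - 1) = 0 := by
    have : A ∩ {p | h p ≤ -R - 1} = ∅ := by
      ext p
      simp only [mem_inter_iff, mem_ofPred_eq, mem_empty_iff_false, iff_false, not_and, not_le]
      intro hp
      have := (abs_le.1 (hR p hp)).1
      linarith
    simp [areaBelow, this]
  have hhi : areaBelow A h R = volume.real A := by
    have : A ∩ {p | h p ≤ R} = A := inter_eq_left.2 fun p hp => (abs_le.1 (hR p hp)).2
    simp [areaBelow, this]
  have hpos : 0 ≤ volume.real A := measureReal_nonneg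
  have := intermediate_value_univ (-R - 1) R hcont
  exact this ⟨by rw [hlo]; linarith, by rw [hhi]; linarith⟩

theorem median_le {A S : Set (ℝ × ℝ)} (hA : volume A ≠ ⊤) {h : ℝ × ℝ → ℝ} {b t : ℝ}
    (hb : areaBelow A h b = volume.real A / 2) (hSA : S ⊆ A) (hS : volume.real A / 2 < volume.real S)
    (ht : ∀ p ∈ S, h p ≤ t) : b ≤ t := by
  by_contra hlt
  push Not at hlt
  have : volume.real S ≤ areaBelow A h b :=
    measureReal_mono (fun p hp => ⟨hSA hp, (ht p hp).trans hlt.le⟩)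
      (ne_top_of_le_ne_top hA (measure_mono inter_subset_left))
  linarith

theorem le_median {A S : Set (ℝ × ℝ)} (hA : volume A ≠ ⊤) {h : ℝ × ℝ → ℝ} (hm : Measurable h)
    {b t : ℝ}
    (hb : areaBelow A h b = volume.real A / 2) (hSA : S ⊆ A) (hS : volume.real A / 2 < volume.real S)
    (ht : ∀ p ∈ S, t ≤ h p) : t ≤ b := by
  by_contra hlt
  push Not at hlt
  have hms : MeasurableSet {p | h p ≤ b} := measurableSet_le hm measurable_const
  have := measureReal_inter_add_sdiff (μ := volume) (s := A) hms hA
  have h2 : volume.real S ≤ volume.real (A \ {p | h p ≤ b}) :=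
    measureReal_mono (fun p hp => ⟨hSA hp, by simpa using hlt.trans_le (ht p hp)⟩)
      (ne_top_of_le_ne_top hA (measure_mono sdiff_subset))
  simp only [areaBelow] at hb
  linarith

/-- The intercept of the line of slope `m` that halves a convex set depends continuously on `m`. -/
theorem continuous_median {A : Set (ℝ × ℝ)} (hA : volume A ≠ ⊤) (hcv : Convex ℝ A)
    (hpos : 0 < volume.real A) {a : ℝ} {β : ℝ → ℝ}
    (hβ : ∀ m, areaBelow A (fun p => p.2 - m * (p.1 - a)) (β m) = volume.real A / 2) :
    Continuous β := by
  have hG : ∀ c, Continuous fun m => areaBelow A (fun p => p.2 - m * (p.1 - a)) c := fun c =>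
    continuous_areaBelow (X := ℝ) (h := fun m p => p.2 - m * (p.1 - a)) (b := fun _ => c) hA
      (fun _ => by fun_prop) (fun _ => by fun_prop) continuous_const (fun m => volume_graph a m c)
  have hmono : ∀ m, Monotone (areaBelow A fun p => p.2 - m * (p.1 - a)) := fun m =>
    areaBelow_mono hA _
  have hstrict : ∀ m c c', c < c' → 0 < areaBelow A (fun p => p.2 - m * (p.1 - a)) c →
      areaBelow A (fun p => p.2 - m * (p.1 - a)) c' < volume.real A →
      areaBelow A (fun p => p.2 - m * (p.1 - a)) c <
        areaBelow A (fun p => p.2 - m * (p.1 - a)) c' := fun m c c' hcc' =>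
    areaBelow_lt hA hcv (by fun_prop) hcc'
  rw [continuous_iff_continuousAt]
  intro m₀
  rw [ContinuousAt, tendsto_order]
  constructor
  · intro c hc
    have : areaBelow A (fun p => p.2 - m₀ * (p.1 - a)) c < volume.real A / 2 := by
      by_contra hle
      push Not at hle
      have := hstrict m₀ c (β m₀) hc (by linarith) (by rw [hβ]; linarith)
      rw [hβ] at this
      linarith
    filter_upwards [(hG c).continuousAt.eventually_lt continuousAt_const this] with m hm
    by_contra hle
    push Not at hle
    have := hmono m hle
    rw [hβ] at this
    linarith
  · intro c hc
    have : volume.real A / 2 < areaBelow A (fun p => p.2 - m₀ * (p.1 - a)) c := by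
      by_contra hle
      push Not at hle
      have := hstrict m₀ (β m₀) c hc (by rw [hβ]; linarith) (by linarith)
      rw [hβ] at this
      linarith
    filter_upwards [continuousAt_const.eventually_lt (hG c).continuousAt this] with m hm
    by_contra hle
    push Not at hle
    have := hmono m hle
    rw [hβ] at this
    linarith

/-! ### Quartering a convex body -/

/-- Two lines, one of them vertical, cut a planar convex body into four parts of equal area. The
lines of slope `m` halving the left and the right half of `K` meet the halving vertical line in
heights whose difference changes sign between steep negative and steep positive slopes. -/
theorem exists_quartering {K : Set (ℝ × ℝ)} (hK : IsCompact K) (hcv : Convex ℝ K)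
    (hne : (interior K).Nonempty) :
    ∃ a b m : ℝ, ∀ σ τ : ℝ, (σ = 1 ∨ σ = -1) → (τ = 1 ∨ τ = -1) →
      volume.real (K ∩ {p | 0 < σ * (p.1 - a) ∧ 0 < τ * (p.2 - m * (p.1 - a) - b)}) =
        volume.real K / 4 := by
  have hfin : volume K ≠ ⊤ := hK.measure_lt_top.ne
  have hV : 0 < volume.real K :=
    ENNReal.toReal_pos ((isOpen_interior.measure_pos volume hne).trans_le
      (measure_mono interior_subset)).ne' hfin
  obtain ⟨R, hR, hb⟩ := hK.isBounded.exists_pos_norm_le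
  have hb1 : ∀ p ∈ K, |p.1| ≤ R := fun p hp => (norm_fst_le p).trans (hb p hp)
  have hb2 : ∀ p ∈ K, |p.2| ≤ R := fun p hp => (norm_snd_le p).trans (hb p hp)
  -- the vertical line halving `K`
  obtain ⟨a, ha⟩ := exists_areaBelow_eq hfin measurable_fst volume_vertical hb1
  have hcont : Continuous (areaBelow K Prod.fst) :=
    continuous_areaBelow (X := ℝ) (h := fun _ => Prod.fst) (b := id) hfin
      (fun _ => measurable_fst) (fun _ => continuous_const) continuous_id volume_vertical
  -- more than half of each half lies at distance at least `c` from that line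
  obtain ⟨c, hc, hc1, hc2⟩ : ∃ c > 0, volume.real K / 4 < areaBelow K Prod.fst (a - c) ∧
      areaBelow K Prod.fst (a + c) < 3 * (volume.real K / 4) := by
    have e1 : ∀ᶠ c in 𝓝 (0:ℝ), volume.real K / 4 < areaBelow K Prod.fst (a - c) := by
      have : Continuous fun c => areaBelow K Prod.fst (a - c) := by fun_prop
      refine continuousAt_const.eventually_lt this.continuousAt ?_
      rw [sub_zero, ha]; linarith
    have e2 : ∀ᶠ c in 𝓝 (0:ℝ), areaBelow K Prod.fst (a + c) < 3 * (volume.real K / 4) := by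
      have : Continuous fun c => areaBelow K Prod.fst (a + c) := by fun_prop
      refine this.continuousAt.eventually_lt continuousAt_const ?_
      rw [add_zero, ha]; linarith
    obtain ⟨c, hc, h⟩ := ((eventually_nhdsWithin_of_eventually_nhds (e1.and e2)).and
      (self_mem_nhdsWithin (s := Ioi (0:ℝ)))).exists
    exact ⟨c, h, hc⟩
  set L := K ∩ {p | p.1 ≤ a} with hL
  set M := K \ {p | p.1 ≤ a} with hM
  have hLv : volume.real L = volume.real K / 2 := ha
  have hms : ∀ a, MeasurableSet {p : ℝ × ℝ | p.1 ≤ a} := fun a =>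
    measurableSet_le measurable_fst measurable_const
  have hMv : volume.real M = volume.real K / 2 := by
    have := measureReal_inter_add_sdiff (μ := volume) (s := K) (hms a) hfin
    change volume.real L + volume.real M = _ at this
    linarith
  have hLfin : volume L ≠ ⊤ := ne_top_of_le_ne_top hfin (measure_mono inter_subset_left)
  have hMfin : volume M ≠ ⊤ := ne_top_of_le_ne_top hfin (measure_mono sdiff_subset)
  have hLcv : Convex ℝ L := hcv.inter (convex_halfSpace_le (IsLinearMap.mk (by simp) (by simp)) a)
  have hMcv : Convex ℝ M := by
    have : M = K ∩ {p | a < p.1} := by ext p; simp [hM]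
    rw [this]
    exact hcv.inter (convex_halfSpace_gt (IsLinearMap.mk (by simp) (by simp)) a)
  -- medians of both halves in the direction of slope `m`
  have hbd : ∀ m, ∀ p ∈ K, |p.2 - m * (p.1 - a)| ≤ R + |m| * (R + |a|) := by
    intro m p hp
    refine (abs_sub _ _).trans (add_le_add (hb2 p hp) ?_)
    rw [abs_mul]
    gcongr
    exact (abs_sub _ _).trans (add_le_add (hb1 p hp) le_rfl)
  have hex : ∀ A ⊆ K, volume A ≠ ⊤ → ∀ m, ∃ b,
      areaBelow A (fun p => p.2 - m * (p.1 - a)) b = volume.real A / 2 := fun A hAK hA m =>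
    exists_areaBelow_eq hA (by fun_prop) (volume_graph a m) fun p hp => hbd m p (hAK hp)
  choose βL hβL using hex L inter_subset_left hLfin
  choose βM hβM using hex M sdiff_subset hMfin
  have cL := continuous_median hLfin hLcv (by rw [hLv]; linarith) hβL
  have cM := continuous_median hMfin hMcv (by rw [hMv]; linarith) hβM
  have hSL : volume.real L / 2 < volume.real (K ∩ {p | p.1 ≤ a - c}) := by
    rw [hLv]; simp only [areaBelow] at hc1; linarith
  have hSM : volume.real M / 2 < volume.real (K \ {p | p.1 ≤ a + c}) := by
    have := measureReal_inter_add_sdiff (μ := volume) (s := K) (hms (a + c)) hfin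
    rw [hMv]; simp only [areaBelow] at hc2; linarith
  have sL : K ∩ {p | p.1 ≤ a - c} ⊆ L := fun p hp => ⟨hp.1, by
    have := hp.2; simp only [mem_ofPred_eq] at *; linarith⟩
  have sM : K \ {p | p.1 ≤ a + c} ⊆ M := fun p hp => ⟨hp.1, by
    have := hp.2; simp only [mem_ofPred_eq, not_le] at *; linarith⟩
  have hRc : R / c * c = R := div_mul_cancel₀ _ hc.ne'
  have hRc0 : 0 < R / c := by positivity
  have l1 : 0 ≤ βL (R / c) := by
    refine le_median hLfin (by fun_prop) (hβL _) sL hSL fun p hp => ?_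
    have h1 := (abs_le.1 (hb2 p hp.1)).1
    have h2 : p.1 ≤ a - c := hp.2
    nlinarith
  have l2 : βM (R / c) ≤ 0 := by
    refine median_le hMfin (hβM _) sM hSM fun p hp => ?_
    have h1 := (abs_le.1 (hb2 p hp.1)).2
    have h2 : a + c < p.1 := by simpa using hp.2
    nlinarith
  have l3 : βL (-(R / c)) ≤ 0 := by
    refine median_le hLfin (hβL _) sL hSL fun p hp => ?_
    have h1 := (abs_le.1 (hb2 p hp.1)).2
    have h2 : p.1 ≤ a - c := hp.2
    nlinarith
  have l4 : 0 ≤ βM (-(R / c)) := by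
    refine le_median hMfin (by fun_prop) (hβM _) sM hSM fun p hp => ?_
    have h1 := (abs_le.1 (hb2 p hp.1)).1
    have h2 : a + c < p.1 := by simpa using hp.2
    nlinarith
  -- for the steep slopes `± R / c` the two medians lie on opposite sides of `0`
  obtain ⟨m, hm⟩ : ∃ m, βL m - βM m = 0 :=
    intermediate_value_univ (-(R / c)) (R / c) (cL.sub cM)
      ⟨by simp only [Pi.sub_apply]; linarith, by simp only [Pi.sub_apply]; linarith⟩
  set b := βL m with hbdef
  have hbM : βM m = b := by linarith
  have qL : volume.real (L ∩ {p | p.2 - m * (p.1 - a) ≤ b}) = volume.real K / 4 := by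
    have := hβL m
    simp only [areaBelow] at this
    rw [this, hLv]; ring
  have qM : volume.real (M ∩ {p | p.2 - m * (p.1 - a) ≤ b}) = volume.real K / 4 := by
    have := hβM m
    simp only [areaBelow] at this
    rw [← hbM, this, hMv]; ring
  have hmb : MeasurableSet {p : ℝ × ℝ | p.2 - m * (p.1 - a) ≤ b} :=
    measurableSet_le (by fun_prop) measurable_const
  have qL' := measureReal_inter_add_sdiff (μ := volume) (s := L) hmb hLfin
  have qM' := measureReal_inter_add_sdiff (μ := volume) (s := M) hmb hMfin
  -- open and half-open wedges differ by subsets of the two lines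
  have hae : ∀ᵐ p : ℝ × ℝ, p.1 ≠ a ∧ p.2 - m * (p.1 - a) ≠ b := by
    have h1 := volume_vertical a
    have h2 := volume_graph a m b
    rw [measure_eq_zero_iff_ae_notMem] at h1 h2
    filter_upwards [h1, h2] with p hp1 hp2 using ⟨hp1, hp2⟩
  have hcongr : ∀ S T : Set (ℝ × ℝ), (∀ p, p.1 ≠ a → p.2 - m * (p.1 - a) ≠ b → (p ∈ S ↔ p ∈ T)) →
      volume.real S = volume.real T := by
    intro S T hST
    refine measureReal_congr ?_
    filter_upwards [hae] with p hp
    exact propext (hST p hp.1 hp.2)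
  refine ⟨a, b, m, ?_⟩
  rintro σ τ (rfl | rfl) (rfl | rfl)
  · rw [hcongr _ (M \ {p | p.2 - m * (p.1 - a) ≤ b})]
    · linarith
    · intro p _ _
      simp only [hM, mem_inter_iff, Set.mem_sdiff, mem_ofPred_eq, not_le, one_mul, sub_pos]
      tauto
  · rw [hcongr _ (M ∩ {p | p.2 - m * (p.1 - a) ≤ b})]
    · linarith
    · intro p _ h
      have : p.2 - m * (p.1 - a) ≤ b ↔ 0 < -1 * (p.2 - m * (p.1 - a) - b) :=
        ⟨fun h' => by linarith [lt_of_le_of_ne h' h], fun h' => by linarith⟩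
      simp only [hM, mem_inter_iff, Set.mem_sdiff, mem_ofPred_eq, not_le, one_mul, sub_pos, this]
      tauto
  · rw [hcongr _ (L \ {p | p.2 - m * (p.1 - a) ≤ b})]
    · linarith
    · intro p h _
      have : p.1 ≤ a ↔ 0 < -1 * (p.1 - a) :=
        ⟨fun h' => by linarith [lt_of_le_of_ne h' h], fun h' => by linarith⟩
      simp only [hL, mem_inter_iff, Set.mem_sdiff, mem_ofPred_eq, not_le, one_mul, sub_pos, this]
      tauto
  · rw [hcongr _ (L ∩ {p | p.2 - m * (p.1 - a) ≤ b})]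
    · linarith
    · intro p h h2
      have : p.1 ≤ a ↔ 0 < -1 * (p.1 - a) :=
        ⟨fun h' => by linarith [lt_of_le_of_ne h' h], fun h' => by linarith⟩
      have h3 : p.2 - m * (p.1 - a) ≤ b ↔ 0 < -1 * (p.2 - m * (p.1 - a) - b) :=
        ⟨fun h' => by linarith [lt_of_le_of_ne h' h2], fun h' => by linarith⟩
      simp only [hL, mem_inter_iff, mem_ofPred_eq, this, h3]
      tauto

/-! ### Stability with respect to the quartering centre -/

theorem volume_preimage_matrix {a b c d : ℝ} (h : a * d - b * c ≠ 0) (S : Set (ℝ × ℝ)) :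
    volume ((fun p : ℝ × ℝ => (a * p.1 + b * p.2, c * p.1 + d * p.2)) ⁻¹' S) =
      ENNReal.ofReal |(a * d - b * c)⁻¹| * volume S := by
  set f := Matrix.toLin (Module.Basis.finTwoProd ℝ) (Module.Basis.finTwoProd ℝ) !![a, b; c, d]
    with hf
  have hdet : LinearMap.det f = a * d - b * c := by
    rw [hf, LinearMap.det_toLin, Matrix.det_fin_two_of]
  have hfun : (fun p : ℝ × ℝ => (a * p.1 + b * p.2, c * p.1 + d * p.2)) = f := by
    ext1 p
    exact (Matrix.toLin_finTwoProd_apply a b c d p).symm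
  rw [hfun, Measure.addHaar_preimage_linearMap volume (by rwa [hdet]), hdet]

/-- Each half-plane bounded by a line through the origin contains an open quadrant, so a convex set of
positive area in every quadrant cannot be supported at the origin. -/
theorem mem_nhds_zero_of_quartered {C : Set (ℝ × ℝ)} (hcv : Convex ℝ C)
    (hA : ∀ σ τ : ℝ, (σ = 1 ∨ σ = -1) → (τ = 1 ∨ τ = -1) →
      0 < volume (C ∩ signedQuadrant σ τ)) : C ∈ 𝓝 (0 : ℝ × ℝ) := by
  rw [← mem_interior_iff_mem_nhds]
  by_contra h0
  obtain ⟨f, hf⟩ := geometric_hahn_banach_open_point hcv.interior isOpen_interior h0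
  rw [map_zero] at hf
  have hfe : ∀ p : ℝ × ℝ, f p = p.1 * f (1, 0) + p.2 * f (0, 1) := by
    intro p
    have : p = p.1 • ((1, 0) : ℝ × ℝ) + p.2 • ((0, 1) : ℝ × ℝ) := by ext <;> simp
    conv_lhs => rw [this]
    rw [map_add, map_smul, map_smul, smul_eq_mul, smul_eq_mul]
  have hsgn : ∀ x : ℝ, ∃ σ : ℝ, (σ = 1 ∨ σ = -1) ∧ ∀ y, 0 < σ * y → 0 ≤ y * x := by
    intro x
    rcases le_total 0 x with h | h
    · exact ⟨1, Or.inl rfl, fun y hy => by nlinarith⟩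
    · exact ⟨-1, Or.inr rfl, fun y hy => by nlinarith⟩
  obtain ⟨σ, hσ, h1⟩ := hsgn (f (1, 0))
  obtain ⟨τ, hτ, h2⟩ := hsgn (f (0, 1))
  have hsub : C ∩ signedQuadrant σ τ ⊆ frontier C := by
    rintro p ⟨hpC, hp1, hp2⟩
    refine ⟨subset_closure hpC, fun hpi => ?_⟩
    have := hf p hpi
    rw [hfe] at this
    linarith [h1 _ hp1, h2 _ hp2]
  exact (hA σ τ hσ hτ).ne' (measure_mono_null hsub (hcv.addHaar_frontier volume))

theorem ellNorm_mul {ρ r : ℝ} (hr : 0 < r) (x y : ℝ) :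
    ellNorm ρ (r * x) (r * y) = r * ellNorm ρ x y := by
  rw [ellNorm, ellNorm, ← Real.sqrt_sq hr.le, ← Real.sqrt_mul (sq_nonneg _), Real.sqrt_sq hr.le]
  congr 1
  ring

/-- The polar of the translate of `K` that moves `z` to the origin. -/
def planePolarAt (K : Set (ℝ × ℝ)) (z : ℝ × ℝ) : Set (ℝ × ℝ) :=
  {q | ∀ p ∈ K, (p.1 - z.1) * q.1 + (p.2 - z.2) * q.2 ≤ 1}

/-- Stability in coordinates, with the centre `z` where two quartering lines meet in place of the
Santaló point. An affine map takes these lines to the axes and the area of `K` to `π`, and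
`quartered_body_stability` applies. -/
theorem plane_stability {K : Set (ℝ × ℝ)} (hK : IsCompact K) (hcv : Convex ℝ K)
    (hne : (interior K).Nonempty) :
    ∃ z ∈ interior K, ∀ δ Δ : ℝ, 0 < δ → δ ≤ 1 →
      π ^ 2 * (1 - δ) ≤ volume.real K * volume.real (planePolarAt K z) →
      0 < Δ → Δ ≤ 1 / 100 → 18 * √δ < Δ ^ 2 / 40 →
      ∃ m ρ r : ℝ, 0 < ρ ∧ 0 < r ∧ ∀ p : ℝ × ℝ,
        ((1 + 6 * Δ) * ellNorm ρ (p.1 - z.1) (p.2 - z.2 - m * (p.1 - z.1)) ≤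
            (1 - 14 * Δ) ^ 2 * r → p ∈ K) ∧
          (p ∈ K → (1 - 8 * Δ) * (1 - 14 * Δ) ^ 2 *
            ellNorm ρ (p.1 - z.1) (p.2 - z.2 - m * (p.1 - z.1)) ≤ r) := by
  have hpi := Real.pi_pos
  have hfin : volume K ≠ ⊤ := hK.measure_lt_top.ne
  have hV : 0 < volume.real K :=
    ENNReal.toReal_pos ((isOpen_interior.measure_pos volume hne).trans_le
      (measure_mono interior_subset)).ne' hfin
  obtain ⟨a, b, m, hq⟩ := exists_quartering hK hcv hne
  set V := volume.real K with hVdef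
  set r := √(V / π) with hr
  have hr0 : 0 < r := Real.sqrt_pos.2 (by positivity)
  have hr2 : r ^ 2 = V / π := Real.sq_sqrt (by positivity)
  -- `φ` maps the coordinate axes to the two quartering lines
  set φ : ℝ × ℝ → ℝ × ℝ := fun p => (a + r * p.1, b + r * (p.2 + m * p.1)) with hφ
  set ψ : ℝ × ℝ → ℝ × ℝ := fun p => (r⁻¹ * (p.1 - a), r⁻¹ * (p.2 - b - m * (p.1 - a))) with hψ
  have hφψ : ∀ p, φ (ψ p) = p := fun p => by
    ext <;> simp only [hφ, hψ] <;> field_simp <;> ring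
  have hψφ : ∀ p, ψ (φ p) = p := fun p => by
    ext <;> simp only [hφ, hψ] <;> field_simp <;> ring
  have hφc : Continuous φ := by fun_prop
  have hψc : Continuous ψ := by fun_prop
  set C := φ ⁻¹' K with hCdef
  have hCim : C = ψ '' K := by
    ext p
    constructor
    · intro hp; exact ⟨φ p, hp, hψφ p⟩
    · rintro ⟨q, hq, rfl⟩
      change φ (ψ q) ∈ K
      rwa [hφψ]
  have hC : IsCompact C := hCim ▸ hK.image hψc
  have hCcv : Convex ℝ C := by
    intro x hx y hy s t hs ht hst
    have := hcv hx hy hs ht hst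
    change φ (s • x + t • y) ∈ K
    convert this using 1
    have ht' : t = 1 - s := by linarith
    subst ht'
    ext <;> simp only [hφ, Prod.fst_add, Prod.snd_add, Prod.smul_fst, Prod.smul_snd, smul_eq_mul] <;>
      ring
  have hvolpre : ∀ S, volume.real (φ ⁻¹' S) = (r ^ 2)⁻¹ * volume.real S := by
    intro S
    have e : φ ⁻¹' S = (fun p : ℝ × ℝ => (r * p.1 + 0 * p.2, r * m * p.1 + r * p.2)) ⁻¹'
        ((fun p => ((a, b) : ℝ × ℝ) + p) ⁻¹' S) := by
      ext p
      simp only [mem_preimage, hφ, Prod.mk_add_mk]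
      rw [show b + r * (p.2 + m * p.1) = b + (r * m * p.1 + r * p.2) by ring, zero_mul, add_zero]
    have hdet : r * r - 0 * (r * m) ≠ 0 := by
      rw [zero_mul, sub_zero]; positivity
    rw [Measure.real, e, volume_preimage_matrix hdet, measure_preimage_add, ENNReal.toReal_mul,
      ENNReal.toReal_ofReal (abs_nonneg _), zero_mul, sub_zero, ← sq, abs_of_pos (by positivity)]
    rfl
  have hCq : ∀ σ τ : ℝ, (σ = 1 ∨ σ = -1) → (τ = 1 ∨ τ = -1) →
      volume (C ∩ signedQuadrant σ τ) = ENNReal.ofReal (π / 4) := by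
    intro σ τ hσ hτ
    have e : C ∩ signedQuadrant σ τ =
        φ ⁻¹' (K ∩ {p | 0 < σ * (p.1 - a) ∧ 0 < τ * (p.2 - m * (p.1 - a) - b)}) := by
      ext p
      simp only [hCdef, signedQuadrant, mem_inter_iff, mem_preimage, mem_ofPred_eq]
      have e1 : σ * ((φ p).1 - a) = r * (σ * p.1) := by simp only [hφ]; ring
      have e2 : τ * ((φ p).2 - m * ((φ p).1 - a) - b) = r * (τ * p.2) := by simp only [hφ]; ring
      rw [e1, e2, mul_pos_iff_of_pos_left hr0, mul_pos_iff_of_pos_left hr0]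
    have hf : volume (C ∩ signedQuadrant σ τ) ≠ ⊤ :=
      ne_top_of_le_ne_top hC.measure_lt_top.ne (measure_mono inter_subset_left)
    rw [← ENNReal.ofReal_toReal hf]
    congr 1
    change volume.real _ = _
    rw [e, hvolpre, hq σ τ hσ hτ, hr2]
    field_simp
  have hC0 : C ∈ 𝓝 (0 : ℝ × ℝ) := mem_nhds_zero_of_quartered hCcv fun σ τ hσ hτ => by
    rw [hCq σ τ hσ hτ]; exact ENNReal.ofReal_pos.2 (by positivity)
  have hz : (a, b) ∈ interior K := by
    rw [mem_interior_iff_mem_nhds]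
    have h1 : ψ (a, b) = 0 := by ext <;> simp [hψ]
    have h2 : ψ ⁻¹' C ∈ 𝓝 (a, b) := hψc.continuousAt.preimage_mem_nhds (by rwa [h1])
    refine Filter.mem_of_superset h2 fun p hp => ?_
    have : φ (ψ p) ∈ K := hp
    rwa [hφψ] at this
  refine ⟨(a, b), hz, ?_⟩
  intro δ Δ hδ hδ1 hvol hΔ hΔ1 hη
  have hpol : planePolarAt K (a, b) =
      (fun q : ℝ × ℝ => (r * q.1 + r * m * q.2, 0 * q.1 + r * q.2)) ⁻¹' planePolar C := by
    ext q
    simp only [planePolarAt, planePolar, mem_preimage, mem_ofPred_eq]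
    constructor
    · intro h p hp
      have := h (φ p) hp
      simp only [hφ] at this
      linarith
    · intro h p hp
      have := h (ψ p) (by rw [hCim]; exact ⟨p, hp, rfl⟩)
      simp only [hψ] at this
      have e : r⁻¹ * (p.1 - a) * (r * q.1 + r * m * q.2) +
          r⁻¹ * (p.2 - b - m * (p.1 - a)) * (0 * q.1 + r * q.2) =
          (p.1 - a) * q.1 + (p.2 - b) * q.2 := by field_simp; ring
      rwa [e] at this
  have hpolv : volume.real (planePolarAt K (a, b)) = (r ^ 2)⁻¹ * volume.real (planePolar C) := by
    have hdet : r * r - r * m * 0 ≠ 0 := by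
      rw [mul_zero, sub_zero]; positivity
    rw [Measure.real, hpol, volume_preimage_matrix hdet, ENNReal.toReal_mul,
      ENNReal.toReal_ofReal (abs_nonneg _), mul_zero, sub_zero, ← sq, abs_of_pos (by positivity)]
    rfl
  have hvol' : π * (1 - δ) ≤ (volume (planePolar C)).toReal := by
    rw [hpolv, hr2] at hvol
    have e : V * ((V / π)⁻¹ * volume.real (planePolar C)) = π * volume.real (planePolar C) := by
      field_simp
    rw [e, pow_two, mul_assoc] at hvol
    exact le_of_mul_le_mul_left hvol hpi
  obtain ⟨ρ, hρ, h⟩ := quartered_body_stability hC hCcv hC0 hCq hδ hδ1 hvol' hΔ hΔ1 hη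
  refine ⟨m, ρ, r, hρ, hr0, fun p => ?_⟩
  have hmem : p ∈ K ↔ ψ p ∈ C := by
    change _ ↔ φ (ψ p) ∈ K
    rw [hφψ]
  have hE : ellNorm ρ (p.1 - a) (p.2 - b - m * (p.1 - a)) = r * ellNorm ρ (ψ p).1 (ψ p).2 := by
    rw [← ellNorm_mul hr0]
    simp only [hψ]
    congr 1 <;> field_simp
  simp only
  rw [hmem, hE]
  refine ⟨fun hp => (h (ψ p)).1 ?_, fun hp => ?_⟩
  · nlinarith
  · have := (h (ψ p)).2 hp
    nlinarith

/-! ### Ellipses, and passage to the Euclidean plane -/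

/-- The failure of the Banach–Mazur hypothesis for the factor `lam`, in coordinates: an ellipse
with centre `z`, given by the matrix with rows `(a, b)` and `(c, d)`, lies in `K`, and its
`lam`-fold dilate about `z` contains `K`. -/
theorem exists_ellipse_of_matrix {K : Set E2} {a b c d lam : ℝ} (z : ℝ × ℝ)
    (hdet : a * d - b * c ≠ 0)
    (hin : ∀ u w : ℝ, u ^ 2 + w ^ 2 ≤ 1 →
      !₂[z.1 + (a * u + b * w), z.2 + (c * u + d * w)] ∈ K)
    (hout : ∀ x y : ℝ, !₂[x, y] ∈ K → ∃ u w : ℝ, u ^ 2 + w ^ 2 ≤ 1 ∧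
      x = z.1 + lam * (a * u + b * w) ∧ y = z.2 + lam * (c * u + d * w)) :
    ∃ (T : E2 →ₗ[ℝ] E2) (t : E2), Function.Bijective T ∧
      (fun x => T x + t) '' Metric.closedBall (0 : E2) 1 ⊆ K ∧
      K ⊆ (fun x => lam • T x + t) '' Metric.closedBall (0 : E2) 1 := by
  have hball : ∀ v : E2, v ∈ Metric.closedBall (0 : E2) 1 ↔ v 0 ^ 2 + v 1 ^ 2 ≤ 1 := by
    intro v
    rw [mem_closedBall_zero_iff, EuclideanSpace.norm_eq, Real.sqrt_le_left zero_le_one,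
      Fin.sum_univ_two]
    simp
  let T : E2 →ₗ[ℝ] E2 :=
    { toFun := fun v => !₂[a * v 0 + b * v 1, c * v 0 + d * v 1]
      map_add' := fun v w => by ext i; fin_cases i <;> simp <;> ring
      map_smul' := fun k v => by ext i; fin_cases i <;> simp <;> ring }
  have hT : ∀ v, T v = !₂[a * v 0 + b * v 1, c * v 0 + d * v 1] := fun v => rfl
  have hinj : Function.Injective T := by
    rw [← LinearMap.ker_eq_bot, LinearMap.ker_eq_bot']
    intro v hv
    rw [hT] at hv
    have h0 : a * v 0 + b * v 1 = 0 := by simpa using congrArg (fun x : E2 => x 0) hv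
    have h1 : c * v 0 + d * v 1 = 0 := by simpa using congrArg (fun x : E2 => x 1) hv
    have e0 : (a * d - b * c) * v 0 = 0 := by linear_combination d * h0 - b * h1
    have e1 : (a * d - b * c) * v 1 = 0 := by linear_combination a * h1 - c * h0
    ext i
    fin_cases i
    · simpa [hdet] using e0
    · simpa [hdet] using e1
  refine ⟨T, !₂[z.1, z.2], ⟨hinj, LinearMap.injective_iff_surjective.1 hinj⟩, ?_, ?_⟩
  · rintro _ ⟨v, hv, rfl⟩
    convert hin (v 0) (v 1) ((hball v).1 hv) using 1
    ext i
    fin_cases i <;> simp [hT] <;> ring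
  · intro x hx
    obtain ⟨u, w, huw, h0, h1⟩ := hout (x 0) (x 1) (by
      convert hx using 1
      ext i; fin_cases i <;> rfl)
    refine ⟨!₂[u, w], (hball _).2 (by simpa using huw), ?_⟩
    ext i
    fin_cases i
    · simp [hT]; linarith
    · simp [hT]; linarith

/-- Every planar convex body lies between an ellipse and its 12-fold dilate. In the affine
coordinates of a triangle of maximal area in `K`, the body lies in `[-1, 1]²` and contains the
disc of radius `1/6` about the centroid `(1/3, 1/3)`. -/
theorem exists_rough_ellipse {K : Set (ℝ × ℝ)} (hK : IsCompact K) (hcv : Convex ℝ K)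
    (hne : (interior K).Nonempty) :
    ∃ (a b c d : ℝ) (z : ℝ × ℝ), a * d - b * c ≠ 0 ∧
      (∀ u w : ℝ, u ^ 2 + w ^ 2 ≤ 1 → (z.1 + (a * u + b * w), z.2 + (c * u + d * w)) ∈ K) ∧
      (∀ x y : ℝ, (x, y) ∈ K → ∃ u w : ℝ, u ^ 2 + w ^ 2 ≤ 1 ∧
        x = z.1 + 12 * (a * u + b * w) ∧ y = z.2 + 12 * (c * u + d * w)) := by
  set D : (ℝ × ℝ) × (ℝ × ℝ) × (ℝ × ℝ) → ℝ := fun t =>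
    (t.2.1.1 - t.1.1) * (t.2.2.2 - t.1.2) - (t.2.1.2 - t.1.2) * (t.2.2.1 - t.1.1) with hD
  obtain ⟨p, hp⟩ := hne
  have hpK := interior_subset hp
  obtain ⟨⟨P, Q, R⟩, ⟨hP, hQ, hR⟩, hmax⟩ :=
    (hK.prod (hK.prod hK)).exists_isMaxOn ⟨(p, p, p), hpK, hpK, hpK⟩
      (f := D) (by fun_prop)
  have hmax' : ∀ A ∈ K, ∀ B ∈ K, ∀ C ∈ K, D (A, B, C) ≤ D (P, Q, R) :=
    fun A hA B hB C hC => hmax (show (A, B, C) ∈ K ×ˢ K ×ˢ K from ⟨hA, hB, hC⟩)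
  have hpos : 0 < D (P, Q, R) := by
    obtain ⟨r, hr, hb⟩ := Metric.nhds_basis_closedBall.mem_iff.1 (mem_interior_iff_mem_nhds.1 hp)
    have h1 : (p.1 + r, p.2) ∈ K := hb (by
      simp [Prod.dist_eq, abs_of_pos hr, hr.le])
    have h2 : (p.1, p.2 + r) ∈ K := hb (by
      simp [Prod.dist_eq, abs_of_pos hr, hr.le])
    refine lt_of_lt_of_le ?_ (hmax' p hpK _ h1 _ h2)
    simp only [hD]
    nlinarith
  have hE : (Q.1 - P.1) * (R.2 - P.2) - (Q.2 - P.2) * (R.1 - P.1) = D (P, Q, R) := rfl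
  set E := D (P, Q, R) with hEdef
  refine ⟨(Q.1 - P.1) / 6, (R.1 - P.1) / 6, (Q.2 - P.2) / 6, (R.2 - P.2) / 6,
    ((P.1 + Q.1 + R.1) / 3, (P.2 + Q.2 + R.2) / 3), ?_, ?_, ?_⟩
  · have : (Q.1 - P.1) / 6 * ((R.2 - P.2) / 6) - (R.1 - P.1) / 6 * ((Q.2 - P.2) / 6) = E / 36 := by
      rw [← hE]; ring
    rw [this]
    positivity
  · intro u w huw
    have hu : -1 ≤ u := by nlinarith [sq_nonneg w]
    have hw : -1 ≤ w := by nlinarith [sq_nonneg u]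
    have hs : u + w ≤ 2 := by nlinarith [sq_nonneg (u - 1), sq_nonneg (w - 1)]
    have hPQ : (1 - (1 / 3 + u / 6) - (1 / 3 + w / 6)) • P + (1 / 3 + u / 6) • Q +
        (1 / 3 + w / 6) • R ∈ K := by
      have := hcv.sum_mem (t := (Finset.univ : Finset (Fin 3)))
        (w := ![1 - (1 / 3 + u / 6) - (1 / 3 + w / 6), 1 / 3 + u / 6, 1 / 3 + w / 6])
        (z := ![P, Q, R])
        (by intro i _; fin_cases i <;> simp <;> linarith)
        (by simp [Fin.sum_univ_three]; ring)
        (by intro i _; fin_cases i <;> simp [hP, hQ, hR])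
      simpa [Fin.sum_univ_three] using this
    convert hPQ using 1
    ext <;> simp <;> ring
  · intro x y hxy
    set A := (x - P.1) * (R.2 - P.2) - (y - P.2) * (R.1 - P.1) with hA
    set B := (Q.1 - P.1) * (y - P.2) - (Q.2 - P.2) * (x - P.1) with hB
    have a1 : A ≤ E := hmax' P hP (x, y) hxy R hR
    have a2 : -A ≤ E := by
      have := hmax' P hP R hR (x, y) hxy
      simp only [hD] at this
      linarith
    have b1 : B ≤ E := hmax' P hP Q hQ (x, y) hxy
    have b2 : -B ≤ E := by
      have := hmax' P hP (x, y) hxy Q hQ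
      simp only [hD] at this
      linarith
    have aa1 : A / E ≤ 1 := (div_le_one hpos).2 a1
    have aa2 : -1 ≤ A / E := by rw [le_div_iff₀ hpos]; linarith
    have bb1 : B / E ≤ 1 := (div_le_one hpos).2 b1
    have bb2 : -1 ≤ B / E := by rw [le_div_iff₀ hpos]; linarith
    refine ⟨(A / E - 1 / 3) / 2, (B / E - 1 / 3) / 2, by nlinarith, ?_, ?_⟩
    · have : x = P.1 + A / E * (Q.1 - P.1) + B / E * (R.1 - P.1) := by
        field_simp
        rw [hA, hB, ← hE]; ring
      simp only
      linarith
    · have : y = P.2 + A / E * (Q.2 - P.2) + B / E * (R.2 - P.2) := by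
        field_simp
        rw [hA, hB, ← hE]; ring
      simp only
      linarith

/-- The coordinate identification of the Euclidean plane with `ℝ × ℝ`. -/
def planeCoord : E2 ≃L[ℝ] ℝ × ℝ :=
  (EuclideanSpace.equiv (Fin 2) ℝ).trans (ContinuousLinearEquiv.finTwoArrow ℝ ℝ)

theorem planeCoord_apply (v : E2) : planeCoord v = (v 0, v 1) := rfl

theorem planeCoord_symm_apply (p : ℝ × ℝ) : planeCoord.symm p = !₂[p.1, p.2] := by
  rw [ContinuousLinearEquiv.symm_apply_eq, planeCoord_apply]
  simp

theorem volume_preimage_planeCoord_symm (S : Set E2) :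
    volume (planeCoord.symm ⁻¹' S) = volume S := by
  have h1 : MeasurePreserving (planeCoord : E2 → ℝ × ℝ) volume volume :=
    (volume_preserving_finTwoArrow ℝ).comp (PiLp.volume_preserving_ofLp (Fin 2))
  have h2 := h1.measure_preimage_equiv (f := planeCoord.toHomeomorph.toMeasurableEquiv)
    (planeCoord.symm ⁻¹' S)
  rw [← h2]
  congr 1
  ext v
  simp

theorem preimage_translatePolar (K : Set E2) (z : E2) :
    planeCoord.symm ⁻¹' translatePolar K z =
      planePolarAt (planeCoord.symm ⁻¹' K) (planeCoord z) := by
  ext q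
  simp only [translatePolar, planePolarAt, mem_preimage, mem_ofPred_eq, planeCoord_symm_apply,
    planeCoord_apply]
  constructor
  · intro h p hp
    have := h _ hp
    simp only [PiLp.inner_apply, Fin.sum_univ_two] at this
    simp at this
    linarith
  · intro h x hx
    have := h (x 0, x 1) (by
      convert hx using 1
      ext i; fin_cases i <;> rfl)
    simp only [PiLp.inner_apply, Fin.sum_univ_two]
    simp
    linarith

theorem volume_planePolarAt_lt_top {K : Set (ℝ × ℝ)} {z : ℝ × ℝ} (hz : z ∈ interior K) :
    volume (planePolarAt K z) < ⊤ := by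
  have h0 : (fun p => p + z) ⁻¹' K ∈ 𝓝 (0 : ℝ × ℝ) := by
    refine (by fun_prop : Continuous fun p : ℝ × ℝ => p + z).continuousAt.preimage_mem_nhds ?_
    rw [zero_add]
    exact mem_interior_iff_mem_nhds.1 hz
  refine lt_of_le_of_lt (measure_mono ?_) (isCompact_planePolar h0).measure_lt_top
  intro q hq p hp
  have := hq _ hp
  simpa using this

/-- With `Δ = ε / 1680`, the two dilation factors of `plane_stability` differ by a factor less
than `1 + ε`. -/
theorem ratio_lt {ε : ℝ} (h0 : 0 < ε) (h1 : ε ≤ 11) :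
    (1 + 6 * (ε / 1680)) < (1 + ε) * ((1 - 8 * (ε / 1680)) * (1 - 14 * (ε / 1680)) ^ 4) := by
  set t := ε / 1680 with ht
  have he : ε = 1680 * t := by rw [ht]; ring
  have t0 : 0 < t := by positivity
  have t1 : t ≤ 11 / 1680 := by linarith
  have b1 : 1 - 56 * t ≤ (1 - 14 * t) ^ 4 := by
    have := one_add_mul_le_pow (a := -(14 * t)) (by linarith) 4
    push_cast at this
    rw [← sub_eq_add_neg] at this
    linarith
  have b2 : 1 - 64 * t ≤ (1 - 8 * t) * (1 - 14 * t) ^ 4 := by nlinarith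
  rw [he]
  nlinarith

/-- The ellipse produced by `plane_stability`, as the image of the unit disc under a matrix. -/
theorem exists_fine_ellipse {K : Set (ℝ × ℝ)} {z : ℝ × ℝ} {m ρ A B : ℝ} (hρ : 0 < ρ)
    (hA : 0 < A) (hB : 0 < B)
    (h : ∀ p : ℝ × ℝ, (ellNorm ρ (p.1 - z.1) (p.2 - z.2 - m * (p.1 - z.1)) ≤ A → p ∈ K) ∧
      (p ∈ K → ellNorm ρ (p.1 - z.1) (p.2 - z.2 - m * (p.1 - z.1)) ≤ B)) :
    ∃ a b c d : ℝ, a * d - b * c ≠ 0 ∧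
      (∀ u w : ℝ, u ^ 2 + w ^ 2 ≤ 1 → (z.1 + (a * u + b * w), z.2 + (c * u + d * w)) ∈ K) ∧
      (∀ x y : ℝ, (x, y) ∈ K → ∃ u w : ℝ, u ^ 2 + w ^ 2 ≤ 1 ∧
        x = z.1 + B / A * (a * u + b * w) ∧ y = z.2 + B / A * (c * u + d * w)) := by
  set σ := √ρ with hσ
  have hσ0 : 0 < σ := Real.sqrt_pos.2 hρ
  have hσ2 : ρ = σ ^ 2 := (Real.sq_sqrt hρ.le).symm
  refine ⟨A * σ, 0, A * m * σ, A / σ, ?_, ?_, ?_⟩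
  · have : A * σ * (A / σ) - 0 * (A * m * σ) = A ^ 2 := by field_simp; ring
    rw [this]
    positivity
  · intro u w huw
    refine (h _).1 ?_
    rw [ellNorm, Real.sqrt_le_left hA.le, hσ2]
    have : (z.1 + (A * σ * u + 0 * w) - z.1) ^ 2 / σ ^ 2 + σ ^ 2 *
        (z.2 + (A * m * σ * u + A / σ * w) - z.2 -
          m * (z.1 + (A * σ * u + 0 * w) - z.1)) ^ 2 = A ^ 2 * (u ^ 2 + w ^ 2) := by
      field_simp
      ring
    simp only
    rw [this]
    nlinarith [sq_nonneg A]
  · intro x y hxy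
    have := (h _).2 hxy
    rw [ellNorm, Real.sqrt_le_left hB.le, hσ2] at this
    simp only at this
    refine ⟨(x - z.1) / (σ * B), σ * (y - z.2 - m * (x - z.1)) / B, ?_, ?_, ?_⟩
    · have e : ((x - z.1) / (σ * B)) ^ 2 + (σ * (y - z.2 - m * (x - z.1)) / B) ^ 2 =
          ((x - z.1) ^ 2 / σ ^ 2 + σ ^ 2 * (y - z.2 - m * (x - z.1)) ^ 2) / B ^ 2 := by
        field_simp
      rw [e, div_le_one (by positivity)]
      exact this
    · field_simp
      ring
    · field_simp
      ring

end

/-- Stability of the planar Blaschke–Santaló inequality: if the Banach–Mazur distance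
of K from the ellipses is at least 1 + ε, then V(K)·V((K − s(K))*) ≤ π²(1 − c·ε⁶). -/
theorem blaschke_santalo_stability :
    ∃ c : ℝ, 0 < c ∧
      ∀ (K : Set E2), IsCompact K → Convex ℝ K → (interior K).Nonempty →
      ∀ s : E2, IsSantaloPoint K s →
      ∀ ε : ℝ, 0 < ε →
      (¬ ∃ (T : E2 →ₗ[ℝ] E2) (a : E2) (lam : ℝ), Function.Bijective T ∧
          1 ≤ lam ∧ lam < 1 + ε ∧
          (fun x => T x + a) '' Metric.closedBall (0 : E2) 1 ⊆ K ∧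
          K ⊆ (fun x => lam • T x + a) '' Metric.closedBall (0 : E2) 1) →
      volume K * volume (translatePolar K s) ≤
        ENNReal.ofReal (π ^ 2 * (1 - c * ε ^ 6)) := by
  -- the square root of `c * ε ^ 6` is `ε ^ 3 / 10 ^ 11`, to be compared with `(ε / 1680) ^ 2`
  refine ⟨(1 / 10 ^ 11) ^ 2, by positivity, ?_⟩
  intro K hK hcv hne s hs ε hε hfar
  -- `K'` is the body in coordinates
  set K' : Set (ℝ × ℝ) := planeCoord.symm ⁻¹' K with hK'
  have hmem : ∀ x y : ℝ, !₂[x, y] ∈ K ↔ (x, y) ∈ K' := fun x y => by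
    rw [hK', Set.mem_preimage, planeCoord_symm_apply]
  have hK'c : IsCompact K' := planeCoord.symm.toHomeomorph.isClosedEmbedding.isCompact_preimage hK
  have hK'cv : Convex ℝ K' := hcv.linear_preimage planeCoord.symm.toLinearEquiv.toLinearMap
  have hsint : interior K' = planeCoord.symm ⁻¹' interior K :=
    (planeCoord.symm.toHomeomorph.preimage_interior K).symm
  have hK'ne : (interior K').Nonempty := by
    obtain ⟨p, hp⟩ := hne
    exact ⟨planeCoord p, by rw [hsint]; simpa using hp⟩
  have hno : ∀ (a b c d lam : ℝ) (z : ℝ × ℝ), 1 ≤ lam → lam < 1 + ε → a * d - b * c ≠ 0 →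
      (∀ u w : ℝ, u ^ 2 + w ^ 2 ≤ 1 → (z.1 + (a * u + b * w), z.2 + (c * u + d * w)) ∈ K') →
      ¬ (∀ x y : ℝ, (x, y) ∈ K' → ∃ u w : ℝ, u ^ 2 + w ^ 2 ≤ 1 ∧
        x = z.1 + lam * (a * u + b * w) ∧ y = z.2 + lam * (c * u + d * w)) := by
    intro a b c d lam z h1 h2 hdet hin hout
    obtain ⟨T, t, hT⟩ := exists_ellipse_of_matrix (K := K) (lam := lam) z hdet
      (fun u w h => (hmem _ _).2 (hin u w h)) (fun x y h => hout x y ((hmem _ _).1 h))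
    exact hfar ⟨T, t, lam, hT.1, h1, h2, hT.2⟩
  have hε11 : ε ≤ 11 := by
    by_contra hcon
    obtain ⟨a, b, c, d, z, hdet, hin, hout⟩ := exists_rough_ellipse hK'c hK'cv hK'ne
    exact hno a b c d 12 z (by norm_num) (by linarith) hdet hin hout
  by_contra! hlt
  obtain ⟨z, hz, hst⟩ := plane_stability hK'c hK'cv hK'ne
  have hzK : planeCoord.symm z ∈ interior K := by rwa [hsint] at hz
  have hpol : volume (translatePolar K (planeCoord.symm z)) = volume (planePolarAt K' z) := by
    rw [← volume_preimage_planeCoord_symm, preimage_translatePolar,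
      ContinuousLinearEquiv.apply_symm_apply]
  have hge : ENNReal.ofReal (π ^ 2 * (1 - (1 / 10 ^ 11) ^ 2 * ε ^ 6)) ≤
      volume K' * volume (planePolarAt K' z) := by
    rw [hK', volume_preimage_planeCoord_symm, ← hK', ← hpol]
    exact hlt.le.trans (mul_le_mul_right (hs.2 _ hzK) _)
  have hreal : π ^ 2 * (1 - (1 / 10 ^ 11) ^ 2 * ε ^ 6) ≤
      volume.real K' * volume.real (planePolarAt K' z) := by
    rw [Measure.real, Measure.real, ← ENNReal.toReal_mul]
    exact (ENNReal.ofReal_le_iff_le_toReal (ENNReal.mul_ne_top hK'c.measure_lt_top.ne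
      (volume_planePolarAt_lt_top hz).ne)).1 hge
  have hsq : (1 / 10 ^ 11) ^ 2 * ε ^ 6 = (ε ^ 3 / 10 ^ 11) ^ 2 := by ring
  have hε3 : ε ^ 3 ≤ 11 * ε ^ 2 := by nlinarith [sq_nonneg ε]
  have hε2 : ε ^ 2 ≤ 121 := by nlinarith
  rw [hsq] at hreal
  have hq : 0 < 1 - 14 * (ε / 1680) := by linarith
  have hq8 : 0 < 1 - 8 * (ε / 1680) := by linarith
  obtain ⟨m, ρ, r, hρ, hr, h⟩ := hst _ (ε / 1680) (by positivity)
    (pow_le_one₀ (by positivity) (by linarith)) hreal (by positivity) (by linarith) (by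
      rw [Real.sqrt_sq (by positivity)]
      nlinarith [sq_pos_of_pos hε])
  obtain ⟨a, b, c, d, hdet, hin, hout⟩ := exists_fine_ellipse (K := K') (z := z) (m := m)
    (A := (1 - 14 * (ε / 1680)) ^ 2 * r / (1 + 6 * (ε / 1680)))
    (B := r / ((1 - 8 * (ε / 1680)) * (1 - 14 * (ε / 1680)) ^ 2)) hρ (by positivity)
    (by positivity) (fun p => ⟨fun hp => (h p).1 (by
      rwa [le_div_iff₀' (by positivity)] at hp), fun hp => by
      rw [le_div_iff₀' (by positivity)]
      exact (h p).2 hp⟩)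
  refine hno a b c d _ z ?_ ?_ hdet hin hout
  · have : r / ((1 - 8 * (ε / 1680)) * (1 - 14 * (ε / 1680)) ^ 2) /
        ((1 - 14 * (ε / 1680)) ^ 2 * r / (1 + 6 * (ε / 1680))) =
        (1 + 6 * (ε / 1680)) / ((1 - 8 * (ε / 1680)) * (1 - 14 * (ε / 1680)) ^ 4) := by
      field_simp
    rw [this, one_le_div (by positivity)]
    have h4 : (1 - 14 * (ε / 1680)) ^ 4 ≤ 1 := pow_le_one₀ hq.le (by linarith)
    nlinarith
  · have : r / ((1 - 8 * (ε / 1680)) * (1 - 14 * (ε / 1680)) ^ 2) /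
        ((1 - 14 * (ε / 1680)) ^ 2 * r / (1 + 6 * (ε / 1680))) =
        (1 + 6 * (ε / 1680)) / ((1 - 8 * (ε / 1680)) * (1 - 14 * (ε / 1680)) ^ 4) := by
      field_simp
    rw [this, div_lt_iff₀ (by positivity)]
    exact ratio_lt hε hε11
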